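/- Every tree containing exactly two vertices of degree at least 3 is antimagic, i.e. it admits a bijective edge labeling f : E → {1,2,...,|E|} such that the vertex sums φ_f(u) = Σ_{e incident to u} f(e) are pairwise distinct over all vertices. -/

import Mathlib

open Classical

noncomputable section

/-- The vertex sum at `u` of an edge labeling `f`: the sum of the labels of the
edges incident to `u`. -/
def vertexSum {V : Type*} [Fintype V] (G : SimpleGraph V) (f : Sym2 V → ℕ) (u : V) : ℕ :=
  ∑ e ∈ G.incidenceFinset u, f e

/-- `f` is an antimagic labeling of `G`: it is a bijection from the edge set of `G`
onto `{1, …, |E|}` and the vertex sums are pairwise distinct. -/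
def IsAntimagicLabeling {V : Type*} [Fintype V] (G : SimpleGraph V)
    (f : Sym2 V → ℕ) : Prop :=
  Set.BijOn f G.edgeSet (Set.Icc 1 G.edgeFinset.card) ∧
  Function.Injective (vertexSum G f)

/-- `f` is a strongly antimagic labeling of `G`: it is an antimagic labeling and moreover
`deg u < deg v` implies `vertexSum u < vertexSum v`. -/
def IsStronglyAntimagicLabeling {V : Type*} [Fintype V] (G : SimpleGraph V)
    (f : Sym2 V → ℕ) : Prop :=
  Set.BijOn f G.edgeSet (Set.Icc 1 G.edgeFinset.card) ∧
  Function.Injective (vertexSum G f) ∧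
  ∀ u v : V, G.degree u < G.degree v → vertexSum G f u < vertexSum G f v

/-- `G` is antimagic if it admits an antimagic labeling. -/
def IsAntimagic {V : Type*} [Fintype V] (G : SimpleGraph V) : Prop :=
  ∃ f : Sym2 V → ℕ, IsAntimagicLabeling G f

/-- `G` is strongly antimagic if it admits a strongly antimagic labeling. -/
def IsStronglyAntimagic {V : Type*} [Fintype V] (G : SimpleGraph V) : Prop :=
  ∃ f : Sym2 V → ℕ, IsStronglyAntimagicLabeling G f

/-!
Cut the tree at its two centers into the spine, which joins them, and the legs. On a path of length
at least `2`, let small labels alternate with large ones, the paths being run through in the same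
order for both: then the sums at the vertices of degree `2` increase along a lexicographic order,
and each of them exceeds the labels of the leaves, which are small. A center sees an end of the
spine, where the largest labels are, and at least two legs, so its sum exceeds the sums at the
vertices of degree `2` once a long leg at that center has an edge with a large label there; legs of
odd length are given one by the set `X` below. It remains to make the sums at the centers distinct:
a tie is broken by swapping two neighboring labels or by reversing the spine.

If all legs at one center are pendant edges, they receive the largest of the small labels, and two
of these together exceed every label that is paired with the largest one. A tie is again broken by a
swap, except for some shapes with two legs at each center, whose sums are compared directly. If all
legs are pendant edges, the smallest and the largest labels alternate along the spine.
-/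

section Rank

variable {β α : Type*} [LinearOrder α] {E : Finset β} {K : β → α} {e e' : β}

/-- The position of `e` when `E` is listed by increasing key `K`, counted from `1`. -/
def rankBy (E : Finset β) (K : β → α) (e : β) : ℕ :=
  (E.filter fun e' => K e' ≤ K e).card

lemma rankBy_lt_rankBy (he' : e' ∈ E) (h : K e < K e') : rankBy E K e < rankBy E K e' := by
  refine Finset.card_lt_card ((Finset.ssubset_iff_of_subset ?_).2 ⟨e', by simp [he'], by simp [h]⟩)
  exact Finset.monotone_filter_right E fun _ _ hx => hx.trans h.le

lemma rankBy_add_card_filter_lt (E : Finset β) (K : β → α) (e : β) :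
    rankBy E K e + (E.filter fun e' => K e < K e').card = E.card := by
  simpa only [rankBy, not_le] using
    Finset.card_filter_add_card_filter_not (s := E) fun e' => K e' ≤ K e

lemma rankBy_le_card : rankBy E K e ≤ E.card :=
  Finset.card_filter_le E _

lemma rankBy_pos (he : e ∈ E) : 1 ≤ rankBy E K e :=
  Finset.card_pos.2 ⟨e, by simp [he]⟩

lemma rankBy_bijOn (hK : Set.InjOn K E) : Set.BijOn (rankBy E K) E (Set.Icc 1 E.card) := by
  have hmaps : Set.MapsTo (rankBy E K) E (Set.Icc 1 E.card) :=
    fun e he => ⟨rankBy_pos he, rankBy_le_card⟩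
  have hinj : Set.InjOn (rankBy E K) E := by
    intro a ha b hb h
    rcases lt_trichotomy (K a) (K b) with h' | h' | h'
    · exact absurd h (rankBy_lt_rankBy hb h').ne
    · exact hK ha hb h'
    · exact absurd h (rankBy_lt_rankBy ha h').ne'
  refine ⟨hmaps, hinj, ?_⟩
  simpa using Finset.surjOn_of_injOn_of_card_le (t := Finset.Icc 1 E.card) (rankBy E K)
    (by simpa using hmaps) hinj (by simp)

lemma card_le_rankBy_add_card {A : Finset β} (hA : A ⊆ E) (S : Finset β)
    (h : ∀ e' ∈ A, K e < K e' → e' ∈ S) : A.card ≤ rankBy E K e + S.card := by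
  refine (Finset.card_le_card fun x hx => ?_).trans (Finset.card_union_le _ S)
  rw [Finset.mem_union, Finset.mem_filter]
  exact (le_or_gt (K x) (K e)).imp (⟨hA hx, ·⟩) (h x hx)

lemma card_lt_rankBy_add_rankBy {r z : β} (hz : z ∈ E) (φ : β → β)
    (hφ : ∀ e ∈ E, K r < K e → φ e ∈ E ∧ K (φ e) < K z)
    (hinj : Set.InjOn φ {e | e ∈ E ∧ K r < K e}) :
    E.card < rankBy E K r + rankBy E K z := by
  have hle : (E.filter fun e => K r < K e).card ≤ ((E.filter fun e => K e ≤ K z).erase z).card := by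
    refine Finset.card_le_card_of_injOn φ (fun e he => ?_) (by simpa using hinj)
    obtain ⟨he, hre⟩ := Finset.mem_filter.1 he
    obtain ⟨hmem, hlt⟩ := hφ e he hre
    exact Finset.mem_erase.2 ⟨fun h => (h ▸ hlt).false, Finset.mem_filter.2 ⟨hmem, hlt.le⟩⟩
  have hlt := Finset.card_erase_lt_of_mem
    ((Finset.mem_filter (p := fun e => K e ≤ K z)).2 ⟨hz, le_rfl⟩)
  have := rankBy_add_card_filter_lt E K r
  simp only [rankBy] at *
  omega

end Rank

lemma sum_comp_swap {β M : Type*} [AddCommMonoid M] (s : Finset β) (g : β → M) (x y : β) :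
    ∑ e ∈ s, g (Equiv.swap x y e) + (if x ∈ s then g x else 0) + (if y ∈ s then g y else 0) =
      ∑ e ∈ s, g e + (if x ∈ s then g y else 0) + (if y ∈ s then g x else 0) := by
  rw [← Finset.sum_ite_eq' s x g, ← Finset.sum_ite_eq' s y g,
    ← Finset.sum_ite_eq' s x fun _ => g y, ← Finset.sum_ite_eq' s y fun _ => g x]
  simp only [← Finset.sum_add_distrib]
  refine Finset.sum_congr rfl fun e _ => ?_
  rw [Equiv.swap_apply_def]
  split_ifs <;> simp_all [add_comm]

lemma exists_injective_strictMono_refinement {ι : Type*} [Finite ι] (t : ι → ℕ) :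
    ∃ ρ : ι → ℕ, Function.Injective ρ ∧ ∀ c c', t c < t c' → ρ c < ρ c' := by
  cases nonempty_fintype ι
  let K : ι → ℕ ×ₗ Fin (Fintype.card ι) := fun c => toLex (t c, Fintype.equivFin ι c)
  have hK : Function.Injective K := fun c c' h =>
    (Fintype.equivFin ι).injective (Prod.mk.inj (toLex.injective h)).2
  refine ⟨rankBy Finset.univ K, ?_, fun c c' h =>
    rankBy_lt_rankBy (Finset.mem_univ c') (Prod.Lex.toLex_lt_toLex.2 (.inl h))⟩
  simpa [Set.injOn_univ] using (rankBy_bijOn (E := Finset.univ) hK.injOn).injOn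

/-! ### Double spiders cut at their centers -/

/-- A double spider cut at its two centers, which are named by `Bool`: the path `spine` joins the
centers, and any other path `c` is a leg, hanging from the center `side c` (the value `side spine`
is meaningless). The edges of a path of length `len c` are the pairs `(c, i)` with `i < len c`;
along a leg they are listed from the leaf to the center. -/
structure SpiderShape (C : Type*) where
  spine : C
  len : C → ℕ
  side : C → Bool
  len_pos : ∀ c, 1 ≤ len c
  exists_two_legs : ∀ b, ∃ c c', c ≠ c' ∧ c ≠ spine ∧ c' ≠ spine ∧ side c = b ∧ side c' = b

namespace SpiderShape

variable {C : Type*}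

section Basic

variable (S : SpiderShape C)

/-- The edge of the leg `c` at its center. -/
def topEdge (c : C) : C × ℕ :=
  (c, S.len c - 1)

/-- The index of the spine edge at the center `b`, if the spine is listed starting from the
center `b₀`. -/
def endIdx (b₀ b : Bool) : ℕ :=
  if b = b₀ then 0 else S.len S.spine - 1

lemma topEdge_lt (c : C) : (S.topEdge c).2 < S.len (S.topEdge c).1 :=
  Nat.sub_one_lt_of_lt (S.len_pos c)

lemma exists_leg_ne (b : Bool) (r : C) : ∃ z, r ≠ z ∧ z ≠ S.spine ∧ S.side z = b := by
  obtain ⟨c, c', hne, hc, hc', hb, hb'⟩ := S.exists_two_legs b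
  by_cases h : r = c
  · exact ⟨c', h ▸ hne, hc', hb'⟩
  · exact ⟨c, h, hc, hb⟩

variable [Fintype C]

/-- The number of edges of the double spider. -/
def size : ℕ :=
  ∑ c, S.len c

/-- The edge set of the double spider. -/
def edges : Finset (C × ℕ) :=
  (Finset.univ.sigma fun c => Finset.range (S.len c)).map (Equiv.sigmaEquivProd C ℕ).toEmbedding

@[simp]
lemma mem_edges {e : C × ℕ} : e ∈ S.edges ↔ e.2 < S.len e.1 := by
  obtain ⟨c, i⟩ := e
  simp [edges, Finset.mem_map_equiv]

lemma card_edges : S.edges.card = S.size := by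
  simp [edges, size]

/-- The legs at the center `b`. -/
def legs (b : Bool) : Finset C :=
  Finset.univ.filter fun c => c ≠ S.spine ∧ S.side c = b

@[simp]
lemma mem_legs {b : Bool} {c : C} : c ∈ S.legs b ↔ c ≠ S.spine ∧ S.side c = b := by
  simp [legs]

/-- The edges at the center `b`, if the spine is listed starting from the center `b₀`. -/
def star (b₀ b : Bool) : Finset (C × ℕ) :=
  insert (S.spine, S.endIdx b₀ b) ((S.legs b).image S.topEdge)

lemma mem_star {b₀ b : Bool} {e : C × ℕ} : e ∈ S.star b₀ b ↔
    e = (S.spine, S.endIdx b₀ b) ∨ e.1 ≠ S.spine ∧ S.side e.1 = b ∧ e.2 + 1 = S.len e.1 := by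
  obtain ⟨c, i⟩ := e
  simp only [star, Finset.mem_insert, Finset.mem_image, mem_legs, topEdge, Prod.mk.injEq]
  grind [S.len_pos c]

/-- The vertex sum at the center `b`, if the spine is listed starting from the center `b₀`. -/
def centerSum (b₀ : Bool) (g : C × ℕ → ℕ) (b : Bool) : ℕ :=
  ∑ e ∈ S.star b₀ b, g e

lemma centerSum_eq (b₀ : Bool) (g : C × ℕ → ℕ) (b : Bool) :
    S.centerSum b₀ g b = g (S.spine, S.endIdx b₀ b) + ∑ c ∈ S.legs b, g (S.topEdge c) := by
  rw [centerSum, star, Finset.sum_insert (by simp [topEdge]), Finset.sum_image]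
  exact fun c _ c' _ h => (Prod.mk.inj h).1

lemma add_sum_le_centerSum {b₀ b : Bool} {s : Finset C} (hs : s ⊆ S.legs b) (g : C × ℕ → ℕ) :
    g (S.spine, S.endIdx b₀ b) + ∑ c ∈ s, g (S.topEdge c) ≤ S.centerSum b₀ g b := by
  rw [centerSum_eq]
  gcongr

/-- The labeling `g` is a bijection onto `1, …, size`, and the vertex sums at the vertices of
degree `2`, the `g (c, i) + g (c, i + 1)`, are distinct and larger than those at the leaves. -/
structure SeparatesPairs (g : C × ℕ → ℕ) : Prop where
  bijOn : Set.BijOn g S.edges (Set.Icc 1 S.size)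
  leaf_lt_pair : ∀ c, c ≠ S.spine → ∀ c' i, i + 1 < S.len c' → g (c, 0) < g (c', i) + g (c', i + 1)
  pair_inj : ∀ c i c' i', i + 1 < S.len c → i' + 1 < S.len c' →
    g (c, i) + g (c, i + 1) = g (c', i') + g (c', i' + 1) → c = c' ∧ i = i'

/-- The labeling `g` is antimagic, if the spine is listed starting from the center `b₀`. -/
structure IsAntimagicFrom (b₀ : Bool) (g : C × ℕ → ℕ) : Prop extends S.SeparatesPairs g where
  leaf_lt_center : ∀ c, c ≠ S.spine → ∀ b, g (c, 0) < S.centerSum b₀ g b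
  pair_ne_center : ∀ c i, i + 1 < S.len c → ∀ b, g (c, i) + g (c, i + 1) ≠ S.centerSum b₀ g b
  centers_ne : S.centerSum b₀ g true ≠ S.centerSum b₀ g false

end Basic

section Reversal

variable {S : SpiderShape C}

/-- The involution of the edges that reverses the spine. -/
def reverseSpine (S : SpiderShape C) (e : C × ℕ) : C × ℕ :=
  if e.1 = S.spine then (e.1, S.len S.spine - 1 - e.2) else e

lemma reverseSpine_of_ne {e : C × ℕ} (h : e.1 ≠ S.spine) : S.reverseSpine e = e :=
  if_neg h

lemma pair_reverseSpine (g : C × ℕ → ℕ) {c : C} {i : ℕ} (hi : i + 1 < S.len c) :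
    ∃ i', i' + 1 < S.len c ∧ (g ∘ S.reverseSpine) (c, i) + (g ∘ S.reverseSpine) (c, i + 1) =
      g (c, i') + g (c, i' + 1) ∧ i' = if c = S.spine then S.len S.spine - 2 - i else i := by
  refine ⟨_, ?_, ?_, rfl⟩
  · grind
  · by_cases hc : c = S.spine
    · subst hc
      simp only [Function.comp, reverseSpine, if_true]
      rw [add_comm]
      congr 3 <;> omega
    · simp [reverseSpine, hc]

variable [Fintype C]

lemma bijOn_reverseSpine : Set.BijOn S.reverseSpine S.edges S.edges := by
  have hmaps : Set.MapsTo S.reverseSpine S.edges S.edges := fun e he => by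
    simp only [Finset.mem_coe, mem_edges, reverseSpine] at he ⊢
    grind
  have hinv : Set.LeftInvOn S.reverseSpine S.reverseSpine S.edges := by
    rintro ⟨c, i⟩ he
    simp only [Finset.mem_coe, mem_edges, reverseSpine] at he ⊢
    grind
  exact Set.InvOn.bijOn ⟨hinv, hinv⟩ hmaps hmaps

lemma centerSum_not_comp_reverseSpine (b₀ : Bool) (g : C × ℕ → ℕ) (b : Bool) :
    S.centerSum (!b₀) (g ∘ S.reverseSpine) b = S.centerSum b₀ g b := by
  rw [centerSum_eq, centerSum_eq]
  congr 1
  · have := S.len_pos S.spine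
    cases b <;> cases b₀ <;> simp [reverseSpine, endIdx]
  · refine Finset.sum_congr rfl fun c hc => ?_
    rw [Function.comp, reverseSpine_of_ne (S.mem_legs.1 hc).1]

lemma SeparatesPairs.comp_reverseSpine {g : C × ℕ → ℕ} (h : S.SeparatesPairs g) :
    S.SeparatesPairs (g ∘ S.reverseSpine) where
  bijOn := h.bijOn.comp bijOn_reverseSpine
  leaf_lt_pair c hc c' i hi := by
    obtain ⟨i', hi', hpair, -⟩ := pair_reverseSpine g hi
    rw [hpair, Function.comp, reverseSpine_of_ne (e := (c, _)) hc]
    exact h.leaf_lt_pair c hc c' i' hi'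
  pair_inj c i c' i' hi hi' heq := by
    obtain ⟨j, hj, hpair, rfl⟩ := pair_reverseSpine g hi
    obtain ⟨j', hj', hpair', rfl⟩ := pair_reverseSpine g hi'
    rw [hpair, hpair'] at heq
    grind [h.pair_inj _ _ _ _ hj hj' heq]

lemma IsAntimagicFrom.comp_reverseSpine {b₀ : Bool} {g : C × ℕ → ℕ} (h : S.IsAntimagicFrom b₀ g) :
    S.IsAntimagicFrom (!b₀) (g ∘ S.reverseSpine) where
  toSeparatesPairs := h.toSeparatesPairs.comp_reverseSpine
  leaf_lt_center c hc b := by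
    rw [centerSum_not_comp_reverseSpine, Function.comp, reverseSpine_of_ne (e := (c, _)) hc]
    exact h.leaf_lt_center c hc b
  pair_ne_center c i hi b := by
    obtain ⟨i', hi', hpair, -⟩ := pair_reverseSpine g hi
    rw [hpair, centerSum_not_comp_reverseSpine]
    exact h.pair_ne_center c i' hi' b
  centers_ne := by
    simpa only [centerSum_not_comp_reverseSpine] using h.centers_ne

lemma IsAntimagicFrom.exists_true {b₀ : Bool} {g : C × ℕ → ℕ} (h : S.IsAntimagicFrom b₀ g) :
    ∃ g', S.IsAntimagicFrom true g' := by
  cases b₀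
  · exact ⟨_, h.comp_reverseSpine⟩
  · exact ⟨g, h⟩

end Reversal

end SpiderShape

/-! ### Labeling by ranks -/

namespace SpiderShape

variable {C : Type*} {S : SpiderShape C} {X : C → Prop} {ρ : C → ℕ} {g : C × ℕ → ℕ}

/-- The main component of the key by which the edges are ranked. Along a path of length at least
`2`, tier `2` alternates with the tiers `0` and `3`; pendant legs form tier `1`. Tier `3` consists
of the top edges of the legs in `X` and of the spine ends of even index. -/
def tier (S : SpiderShape C) (X : C → Prop) (e : C × ℕ) : ℕ :=
  if e.1 ≠ S.spine ∧ S.len e.1 = 1 then 1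
  else if e.2 % 2 = 1 then 2
  else if e.1 = S.spine ∧ e.2 = 0 ∨ (e.1 = S.spine ∨ X e.1) ∧ e.2 + 1 = S.len e.1 then 3
  else 0

/-- The key by which the edges are ranked: first the tier, then the position `ρ` of the path, then
the index along the path. -/
def key (S : SpiderShape C) (X : C → Prop) (ρ : C → ℕ) (e : C × ℕ) : ℕ ×ₗ ℕ ×ₗ ℕ :=
  toLex (S.tier X e, toLex (ρ e.1, e.2))

/-- An order `ρ` on the paths, given a set `X` of long legs of odd length: the legs in `X` come
before the spine and the other long legs after it, the odd ones before the even ones. -/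
structure IsOrder (S : SpiderShape C) (X : C → Prop) (ρ : C → ℕ) : Prop where
  odd_of_mem : ∀ c, X c → c ≠ S.spine ∧ S.len c % 2 = 1 ∧ 3 ≤ S.len c
  injective : Function.Injective ρ
  lt_spine : ∀ c, X c → ρ c < ρ S.spine
  spine_lt : ∀ c, c ≠ S.spine → ¬X c → 2 ≤ S.len c → ρ S.spine < ρ c
  odd_lt_even : ∀ c c', c ≠ S.spine → c' ≠ S.spine → 3 ≤ S.len c → S.len c % 2 = 1 →
    S.len c' % 2 = 0 → ρ c < ρ c'

lemma key_lt_key {e e' : C × ℕ} : S.key X ρ e < S.key X ρ e' ↔ S.tier X e < S.tier X e' ∨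
    S.tier X e = S.tier X e' ∧ (ρ e.1 < ρ e'.1 ∨ ρ e.1 = ρ e'.1 ∧ e.2 < e'.2) := by
  simp [key, Prod.Lex.toLex_lt_toLex]

lemma IsOrder.key_injective (hρ : S.IsOrder X ρ) : Function.Injective (S.key X ρ) := by
  rintro ⟨c, i⟩ ⟨c', i'⟩ h
  simp only [key, EmbeddingLike.apply_eq_iff_eq, Prod.mk.injEq] at h
  rw [hρ.injective h.2.1, h.2.2]

lemma exists_isOrder (S : SpiderShape C) [Finite C] (T : C → Prop)
    (hX : ∀ c, X c → c ≠ S.spine ∧ S.len c % 2 = 1 ∧ 3 ≤ S.len c) :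
    ∃ ρ, S.IsOrder X ρ ∧ ∀ c c', c ≠ S.spine → c' ≠ S.spine → ¬T c → T c' →
      S.len c = 1 ∧ S.len c' = 1 ∨ S.len c % 2 = 0 ∧ S.len c' % 2 = 0 → ρ c < ρ c' := by
  obtain ⟨ρ, hinj, hlt⟩ := exists_injective_strictMono_refinement fun c =>
    2 * (if X c then 0 else if c = S.spine then 1 else if S.len c % 2 = 1 then 2 else 3) +
      if T c then 1 else 0
  refine ⟨ρ, ⟨hX, hinj, ?_, ?_, ?_⟩, ?_⟩
  · intro c hc
    have := hX c hc
    exact hlt _ _ (by grind)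
  · intro c hc hcX _
    exact hlt _ _ (by grind)
  · intro c c' hc hc' _ hodd heven
    have := hX c'
    exact hlt _ _ (by grind)
  · intro c c' hc hc' hT hT' hl
    have := hX c
    have := hX c'
    exact hlt _ _ (by grind)

lemma tier_le_three (e : C × ℕ) : S.tier X e ≤ 3 := by
  grind [tier]

lemma tier_of_odd {c : C} {i : ℕ} (hi : i % 2 = 1) (hc : 2 ≤ S.len c) : S.tier X (c, i) = 2 := by
  grind [tier]

lemma tier_of_even {c : C} {i : ℕ} (hi : i % 2 = 0) (hc : 2 ≤ S.len c) :
    S.tier X (c, i) = 0 ∨ S.tier X (c, i) = 3 := by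
  grind [tier]

lemma tier_of_pendant {c : C} (hc : c ≠ S.spine) (h1 : S.len c = 1) (i : ℕ) :
    S.tier X (c, i) = 1 := by
  grind [tier]

lemma tier_spine_zero : S.tier X (S.spine, 0) = 3 := by
  grind [tier]

lemma IsOrder.tier_leaf_le_one (hρ : S.IsOrder X ρ) {c : C} (hc : c ≠ S.spine) :
    S.tier X (c, 0) ≤ 1 := by
  have := hρ.odd_of_mem c
  grind [tier]

lemma IsOrder.tier_topEdge (hρ : S.IsOrder X ρ) {c : C} (hc : X c) :
    S.tier X (S.topEdge c) = 3 := by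
  have := hρ.odd_of_mem c hc
  grind [tier, topEdge]

lemma tier_topEdge_of_even {c : C} (hc : S.len c % 2 = 0) : S.tier X (S.topEdge c) = 2 :=
  tier_of_odd (by grind [S.len_pos c]) (by grind [S.len_pos c])

lemma IsOrder.lt_of_even (hρ : S.IsOrder X ρ) {r c : C} (hr : r ≠ S.spine) (heven : S.len r % 2 = 0)
    (hc : c = S.spine ∨ X c) : ρ c < ρ r := by
  have := hρ.odd_of_mem r
  have hlt : ρ S.spine < ρ r := hρ.spine_lt r hr (by grind) (by grind [S.len_pos r])
  rcases hc with rfl | hc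
  · exact hlt
  · exact (hρ.lt_spine c hc).trans hlt

lemma IsOrder.two_le_len {r : C} (hρ : S.IsOrder X ρ) (hr : X r ∨ S.len r % 2 = 0) :
    2 ≤ S.len r := by
  have := hρ.odd_of_mem r
  grind [S.len_pos r]

lemma eq_topEdge_of_key_spine_zero_lt (hρ : S.IsOrder X ρ) {e : C × ℕ} (he : e.2 < S.len e.1)
    (h : S.key X ρ (S.spine, 0) < S.key X ρ e) :
    e = S.topEdge S.spine ∧ S.len S.spine % 2 = 1 ∧ S.len S.spine ≠ 1 := by
  obtain ⟨c, i⟩ := e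
  rw [key_lt_key, tier_spine_zero] at h
  have hle := tier_le_three (S := S) (X := X) (c, i)
  have : S.tier X (c, i) = 3 := by omega
  have hc : c = S.spine ∨ X c := by grind [tier]
  have := hρ.lt_spine c
  grind [tier, topEdge]

lemma pair_eq_odd_add_even (g : C × ℕ → ℕ) (c : C) (i : ℕ) :
    g (c, i) + g (c, i + 1) = g (c, 2 * (i / 2) + 1) + g (c, 2 * ((i + 1) / 2)) := by
  rcases Nat.even_or_odd' i with ⟨k, rfl | rfl⟩
  · rw [add_comm]
    congr 3 <;> omega
  · congr 3 <;> omega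

variable [Fintype C]

/-- The labeling `g` orders the edges as the key does, except that the pendant edges (and a spine of
length `1`) are only required to stay below tier `2`, resp. are not restricted at all. -/
structure IsAligned (S : SpiderShape C) (X : C → Prop) (ρ : C → ℕ) (g : C × ℕ → ℕ) : Prop where
  bijOn : Set.BijOn g S.edges (Set.Icc 1 S.size)
  lt_of_key_lt : ∀ e e', e.2 < S.len e.1 → e'.2 < S.len e'.1 → 2 ≤ S.len e.1 → 2 ≤ S.len e'.1 →
    S.key X ρ e < S.key X ρ e' → g e < g e'
  lt_of_tier : ∀ e e', e.2 < S.len e.1 → e'.2 < S.len e'.1 → S.tier X e ≤ 1 → 2 ≤ S.tier X e' →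
    2 ≤ S.len e'.1 → g e < g e'

namespace IsAligned

variable {e e' : C × ℕ}

lemma le_size (hg : S.IsAligned X ρ g) (he : e.2 < S.len e.1) : g e ≤ S.size :=
  (hg.bijOn.mapsTo (by simpa using he)).2

lemma pos (hg : S.IsAligned X ρ g) (he : e.2 < S.len e.1) : 1 ≤ g e :=
  (hg.bijOn.mapsTo (by simpa using he)).1

lemma eq_of_eq (hg : S.IsAligned X ρ g) (he : e.2 < S.len e.1) (he' : e'.2 < S.len e'.1)
    (h : g e = g e') : e = e' :=
  hg.bijOn.injOn (by simpa using he) (by simpa using he') h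

lemma exists_eq (hg : S.IsAligned X ρ g) {k : ℕ} (h1 : 1 ≤ k) (hk : k ≤ S.size) :
    ∃ e, e.2 < S.len e.1 ∧ g e = k := by
  simpa using hg.bijOn.surjOn ⟨h1, hk⟩

lemma lt_of_tier_lt (hg : S.IsAligned X ρ g) (he : e.2 < S.len e.1) (he' : e'.2 < S.len e'.1)
    (hl : 2 ≤ S.len e.1) (hl' : 2 ≤ S.len e'.1) (h : S.tier X e < S.tier X e') : g e < g e' :=
  hg.lt_of_key_lt e e' he he' hl hl' (key_lt_key.2 (.inl h))

lemma lt_of_order_lt (hg : S.IsAligned X ρ g) (he : e.2 < S.len e.1) (he' : e'.2 < S.len e'.1)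
    (hl : 2 ≤ S.len e.1) (hl' : 2 ≤ S.len e'.1) (h : S.tier X e = S.tier X e')
    (hlt : ρ e.1 < ρ e'.1) : g e < g e' :=
  hg.lt_of_key_lt e e' he he' hl hl' (key_lt_key.2 (.inr ⟨h, .inl hlt⟩))

lemma lt_of_index_lt (hg : S.IsAligned X ρ g) {c : C} {i i' : ℕ} (hi' : i' < S.len c)
    (h : S.tier X (c, i) = S.tier X (c, i')) (hlt : i < i') : g (c, i) < g (c, i') :=
  hg.lt_of_key_lt _ _ (hlt.trans hi') hi' (by grind) (by grind)
    (key_lt_key.2 (.inr ⟨h, .inr ⟨rfl, hlt⟩⟩))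

lemma comp_swap (hg : S.IsAligned X ρ g) {x y : C × ℕ} (hx : x.2 < S.len x.1)
    (hy : y.2 < S.len y.1) (hlen : S.len x.1 = 1) (hxy : g x = g y + 1) :
    S.IsAligned X ρ (g ∘ Equiv.swap x y) := by
  have hswap : ∀ e e', e.2 < S.len e.1 → e'.2 < S.len e'.1 → 2 ≤ S.len e'.1 → g e < g e' →
      (g ∘ Equiv.swap x y) e < (g ∘ Equiv.swap x y) e' := by
    intro e e' _ he' hl' hlt
    have hne : e' ≠ x := by grind
    have : g e' ≠ g x := fun h => hne (hg.eq_of_eq he' hx h)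
    simp only [Function.comp, Equiv.swap_apply_def]
    grind
  refine ⟨hg.bijOn.comp ((Equiv.swap x y).bijOn' ?_ ?_), ?_, ?_⟩
  · intro e he
    simp only [Finset.mem_coe, mem_edges, Equiv.swap_apply_def] at he ⊢
    split_ifs <;> assumption
  · intro e he
    simp only [Finset.mem_coe, mem_edges, Equiv.symm_swap, Equiv.swap_apply_def] at he ⊢
    split_ifs <;> assumption
  · exact fun e e' he he' hl hl' h => hswap e e' he he' hl' (hg.lt_of_key_lt e e' he he' hl hl' h)
  · exact fun e e' he he' h h' hl' => hswap e e' he he' hl' (hg.lt_of_tier e e' he he' h h' hl')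

end IsAligned

/-- The labeling of the edges by their ranks in the order of the key. -/
def rankLabel (S : SpiderShape C) (X : C → Prop) (ρ : C → ℕ) : C × ℕ → ℕ :=
  rankBy S.edges (S.key X ρ)

lemma rankLabel_lt_rankLabel {e e' : C × ℕ} (he' : e'.2 < S.len e'.1)
    (h : S.key X ρ e < S.key X ρ e') : S.rankLabel X ρ e < S.rankLabel X ρ e' :=
  rankBy_lt_rankBy (by simpa using he') h

lemma IsOrder.isAligned_rankLabel (hρ : S.IsOrder X ρ) : S.IsAligned X ρ (S.rankLabel X ρ) where
  bijOn := S.card_edges ▸ rankBy_bijOn hρ.key_injective.injOn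
  lt_of_key_lt _ _ _ he' _ _ h := rankLabel_lt_rankLabel he' h
  lt_of_tier _ _ _ he' h h' _ := rankLabel_lt_rankLabel he' (key_lt_key.2 (.inl (by omega)))

/-- The key by which the vertices of degree `2` are ordered. -/
def pairKey (S : SpiderShape C) (X : C → Prop) (ρ : C → ℕ) (e : C × ℕ) : ℕ ×ₗ ℕ ×ₗ ℕ :=
  toLex (S.tier X (e.1, 2 * ((e.2 + 1) / 2)), toLex (ρ e.1, e.2))

lemma IsAligned.pair_lt_pair (hg : S.IsAligned X ρ g) (hinj : Function.Injective ρ) {c c' : C}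
    {i i' : ℕ} (hi : i + 1 < S.len c) (hi' : i' + 1 < S.len c')
    (hlt : S.pairKey X ρ (c, i) < S.pairKey X ρ (c', i')) :
    g (c, i) + g (c, i + 1) < g (c', i') + g (c', i' + 1) := by
  simp only [pairKey, Prod.Lex.toLex_lt_toLex] at hlt
  rw [pair_eq_odd_add_even, pair_eq_odd_add_even g c']
  set o := 2 * (i / 2) + 1
  set o' := 2 * (i' / 2) + 1
  set v := 2 * ((i + 1) / 2)
  set v' := 2 * ((i' + 1) / 2)
  have ho : o < S.len c := by omega
  have ho' : o' < S.len c' := by omega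
  have hv : v < S.len c := by omega
  have hv' : v' < S.len c' := by omega
  have hl : 2 ≤ S.len c := by omega
  have hl' : 2 ≤ S.len c' := by omega
  have htier_o : S.tier X (c, o) = 2 := tier_of_odd (by omega) hl
  have htier_o' : S.tier X (c', o') = 2 := tier_of_odd (by omega) hl'
  rcases hlt with hlt | ⟨htier_v, hlt | ⟨hcc, hlt⟩⟩
  · have : S.tier X (c, v) = 0 ∧ S.tier X (c', v') = 3 := by
      have := tier_of_even (X := X) (show v % 2 = 0 by omega) hl
      have := tier_of_even (X := X) (show v' % 2 = 0 by omega) hl'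
      omega
    have := hg.lt_of_tier_lt (e := (c, v)) (e' := (c', o')) hv ho' hl hl' (by omega)
    have := hg.lt_of_tier_lt (e := (c, o)) (e' := (c', v')) ho hv' hl hl' (by omega)
    omega
  · exact add_lt_add
      (hg.lt_of_order_lt ho ho' hl hl' (htier_o.trans htier_o'.symm) hlt)
      (hg.lt_of_order_lt hv hv' hl hl' htier_v hlt)
  · obtain rfl : c = c' := hinj hcc
    have odd_lt : o < o' → g (c, o) < g (c, o') :=
      hg.lt_of_index_lt ho' (htier_o.trans htier_o'.symm)
    have even_lt : v < v' → g (c, v) < g (c, v') := hg.lt_of_index_lt hv' htier_v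
    rcases eq_or_ne o o' with h | h
    · rw [h]
      exact add_lt_add_right (even_lt (by omega)) _
    · rcases eq_or_ne v v' with h' | h'
      · rw [h']
        exact add_lt_add_left (odd_lt (by omega)) _
      · exact add_lt_add (odd_lt (by omega)) (even_lt (by omega))

lemma IsAligned.separatesPairs (hg : S.IsAligned X ρ g) (hρ : S.IsOrder X ρ) :
    S.SeparatesPairs g where
  bijOn := hg.bijOn
  leaf_lt_pair c hc c' i hi := by
    rw [pair_eq_odd_add_even]
    refine Nat.lt_add_right _
      (hg.lt_of_tier (c, 0) _ (S.len_pos c) ?_ (hρ.tier_leaf_le_one hc) ?_ ?_)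
    · grind
    · rw [tier_of_odd (by omega) (by omega)]
    · grind
  pair_inj c i c' i' hi hi' heq := by
    have heqKey : S.pairKey X ρ (c, i) = S.pairKey X ρ (c', i') := by
      rcases lt_trichotomy (S.pairKey X ρ (c, i)) (S.pairKey X ρ (c', i')) with h | h | h
      · exact absurd heq (hg.pair_lt_pair hρ.injective hi hi' h).ne
      · exact h
      · exact absurd heq (hg.pair_lt_pair hρ.injective hi' hi h).ne'
    simp only [pairKey, EmbeddingLike.apply_eq_iff_eq, Prod.mk.injEq] at heqKey
    exact ⟨hρ.injective heqKey.2.1, heqKey.2.2⟩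

lemma IsAligned.isAntimagicFrom (hg : S.IsAligned X ρ g) (hρ : S.IsOrder X ρ) {b₀ : Bool}
    (hlong : ∃ c, 2 ≤ S.len c)
    (hpair : ∀ b c i, i + 1 < S.len c → g (c, i) + g (c, i + 1) < S.centerSum b₀ g b)
    (hne : S.centerSum b₀ g true ≠ S.centerSum b₀ g false) : S.IsAntimagicFrom b₀ g where
  toSeparatesPairs := hg.separatesPairs hρ
  leaf_lt_center c hc b := by
    obtain ⟨c', hc'⟩ := hlong
    exact ((hg.separatesPairs hρ).leaf_lt_pair c hc c' 0 hc').trans (hpair b c' 0 hc')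
  pair_ne_center c i hi b := (hpair b c i hi).ne
  centers_ne := hne

lemma IsAligned.pair_le_add_size (hg : S.IsAligned X ρ g) {A : ℕ}
    (hodd : ∀ c i, i < S.len c → 2 ≤ S.len c → i % 2 = 1 → c = S.spine ∨ X c → g (c, i) ≤ A)
    (hzero : ∀ c i, i < S.len c → 2 ≤ S.len c → S.tier X (c, i) = 0 → g (c, i) ≤ A)
    {c : C} {i : ℕ} (hi : i + 1 < S.len c) : g (c, i) + g (c, i + 1) ≤ A + S.size := by
  rw [pair_eq_odd_add_even]
  have hlen : 2 ≤ S.len c := by omega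
  have ho : 2 * (i / 2) + 1 < S.len c := by omega
  have hv : 2 * ((i + 1) / 2) < S.len c := by omega
  have := hg.le_size (e := (c, 2 * (i / 2) + 1)) ho
  have := hg.le_size (e := (c, 2 * ((i + 1) / 2))) hv
  rcases tier_of_even (X := X) (show 2 * ((i + 1) / 2) % 2 = 0 by omega) hlen with h | h
  · have := hzero c _ hv hlen h
    omega
  · have hc : c = S.spine ∨ X c := by grind [tier]
    have := hodd c _ ho hlen (by omega) hc
    omega

section Domination

variable {r z : C} {b₀ b : Bool}

lemma add_add_le_centerSum (hr : r ∈ S.legs b) (hz : z ∈ S.legs b) (hrz : r ≠ z) (b₀ : Bool)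
    (g : C × ℕ → ℕ) : g (S.spine, S.endIdx b₀ b) + (g (S.topEdge r) + g (S.topEdge z)) ≤
      S.centerSum b₀ g b := by
  rw [← Finset.sum_pair (f := fun c => g (S.topEdge c)) hrz]
  exact S.add_sum_le_centerSum (by simp only [Finset.insert_subset_iff, hr,
    Finset.singleton_subset_iff, hz, and_self]) g

lemma IsAligned.pair_lt_centerSum_of_size_le (hg : S.IsAligned X ρ g) (hρ : S.IsOrder X ρ)
    (hr : r ∈ S.legs b) (hz : z ∈ S.legs b) (hrz : r ≠ z) (hrX : X r ∨ S.len r % 2 = 0)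
    (hend : S.size ≤ g (S.spine, S.endIdx b₀ b) + 1) {c : C} {i : ℕ} (hi : i + 1 < S.len c) :
    g (c, i) + g (c, i + 1) < S.centerSum b₀ g b := by
  have hlen := hρ.two_le_len hrX
  have hpair : g (c, i) + g (c, i + 1) ≤ g (S.topEdge r) - 1 + S.size := by
    refine hg.pair_le_add_size (fun c i hi hc hodd hcX => ?_) (fun c i hi hc hzero => ?_) hi
    · refine Nat.le_sub_one_of_lt ?_
      rcases hrX with h | h
      · refine hg.lt_of_tier_lt hi (S.topEdge_lt r) hc hlen ?_
        rw [tier_of_odd hodd hc, hρ.tier_topEdge h]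
        omega
      · refine hg.lt_of_order_lt hi (S.topEdge_lt r) hc hlen ?_
          (hρ.lt_of_even (S.mem_legs.1 hr).1 h hcX)
        rw [tier_of_odd hodd hc, tier_topEdge_of_even h]
    · refine Nat.le_sub_one_of_lt (hg.lt_of_tier_lt hi (S.topEdge_lt r) hc hlen ?_)
      rcases hrX with h | h
      · rw [hzero, hρ.tier_topEdge h]
        omega
      · rw [hzero, tier_topEdge_of_even h]
        omega
  have := add_add_le_centerSum hr hz hrz b₀ g
  have := hg.pos (S.topEdge_lt r)
  have := hg.pos (S.topEdge_lt z)
  omega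

lemma IsAligned.pair_lt_centerSum_of_even (hg : S.IsAligned X ρ g) (hρ : S.IsOrder X ρ)
    (hr : r ∈ S.legs b) (hz : z ∈ S.legs b) (hrz : r ≠ z) (heven : S.len S.spine % 2 = 0)
    (hend : g (S.topEdge S.spine) ≤ g (S.spine, S.endIdx b₀ b))
    (hsum : S.size < g (S.topEdge r) + g (S.topEdge z)) {c : C} {i : ℕ} (hi : i + 1 < S.len c) :
    g (c, i) + g (c, i + 1) < S.centerSum b₀ g b := by
  have hlt := S.topEdge_lt S.spine
  have hlen : 2 ≤ S.len S.spine := by grind [S.len_pos S.spine]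
  have htier : S.tier X (S.topEdge S.spine) = 2 := tier_topEdge_of_even heven
  have hpair : g (c, i) + g (c, i + 1) ≤ g (S.topEdge S.spine) + S.size := by
    refine hg.pair_le_add_size (fun c i hi hc hodd hcX => ?_) (fun c i hi _ hzero => ?_) hi
    · have htier' := (tier_of_odd (X := X) hodd hc).trans htier.symm
      rcases hcX with rfl | hX
      · rcases (Nat.le_sub_one_of_lt hi).eq_or_lt with rfl | h
        · rfl
        · exact (hg.lt_of_index_lt hlt htier' h).le
      · exact (hg.lt_of_order_lt hi hlt hc hlen htier' (hρ.lt_spine c hX)).le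
    · exact (hg.lt_of_tier _ _ hi hlt (by omega) (by omega) hlen).le
  have := add_add_le_centerSum hr hz hrz b₀ g
  omega

end Domination

lemma IsOrder.size_le_rankLabel_spine_zero_add_one (hρ : S.IsOrder X ρ) :
    S.size ≤ S.rankLabel X ρ (S.spine, 0) + 1 := by
  rw [← card_edges]
  exact card_le_rankBy_add_card subset_rfl {S.topEdge S.spine} fun e he h =>
    Finset.mem_singleton.2 (eq_topEdge_of_key_spine_zero_lt hρ (by simpa using he) h).1

lemma IsOrder.rankLabel_spine_zero (hρ : S.IsOrder X ρ)
    (h : S.len S.spine % 2 = 0 ∨ S.len S.spine = 1) :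
    S.rankLabel X ρ (S.spine, 0) = S.size := by
  refine (hρ.isAligned_rankLabel.le_size (e := (S.spine, 0)) (S.len_pos _)).antisymm ?_
  rw [← card_edges]
  refine card_le_rankBy_add_card (K := S.key X ρ) subset_rfl ∅ fun e he hlt => ?_
  have := eq_topEdge_of_key_spine_zero_lt hρ (by simpa using he) hlt
  omega

lemma IsOrder.rankLabel_topEdge_spine (hρ : S.IsOrder X ρ) (hodd : S.len S.spine % 2 = 1) :
    S.rankLabel X ρ (S.topEdge S.spine) = S.size := by
  by_cases h1 : S.len S.spine = 1
  · simpa [topEdge, h1] using hρ.rankLabel_spine_zero (.inr h1)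
  · have hlt : S.rankLabel X ρ (S.spine, 0) < S.rankLabel X ρ (S.topEdge S.spine) :=
      hρ.isAligned_rankLabel.lt_of_index_lt (S.topEdge_lt S.spine) (by grind [tier])
        (by grind [S.len_pos S.spine])
    have := hρ.isAligned_rankLabel.le_size (S.topEdge_lt S.spine)
    have := hρ.size_le_rankLabel_spine_zero_add_one
    omega

end SpiderShape

namespace SpiderShape

variable {C : Type*} {S : SpiderShape C} {X : C → Prop} {ρ : C → ℕ} {g : C × ℕ → ℕ}

lemma IsOrder.cases_of_key_topEdge_lt (hρ : S.IsOrder X ρ) {r : C} (hr : r ≠ S.spine)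
    (hrX : X r ∨ S.len r % 2 = 0) (heven : S.len S.spine % 2 = 0) {e : C × ℕ}
    (he : e.2 < S.len e.1) (h : S.key X ρ (S.topEdge r) < S.key X ρ e) :
    e = (S.spine, 0) ∨ e.1 ≠ r ∧ e.1 ≠ S.spine ∧
      (X e.1 ∧ e.2 + 1 = S.len e.1 ∨ S.len r % 2 = 0 ∧ S.len e.1 % 2 = 0 ∧ e.2 % 2 = 1) := by
  obtain ⟨c, i⟩ := e
  have hX := hρ.odd_of_mem
  have hlen := S.len_pos
  have hodd := hρ.odd_lt_even c r
  have hlt : S.len r % 2 = 0 → c = S.spine ∨ X c → ρ c < ρ r := hρ.lt_of_even hr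
  rw [key_lt_key] at h
  rcases hrX with hrX | hrX
  · have htier : S.tier X (c, i) ≤ 3 := tier_le_three _
    rw [hρ.tier_topEdge hrX] at h
    have : S.tier X (c, i) = 3 := by omega
    grind [tier, topEdge]
  · rw [tier_topEdge_of_even hrX] at h
    grind [tier, topEdge]

variable [Fintype C]

lemma IsOrder.size_lt_rankLabel_add_rankLabel (hρ : S.IsOrder X ρ) {r z : C} (hr : r ≠ S.spine)
    (hz : z ≠ S.spine) (heven : S.len S.spine % 2 = 0)
    (h : X r ∧ ¬X z ∨ S.len r % 2 = 0 ∧ (S.len z = 1 ∨ S.len z % 2 = 0)) :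
    S.size < S.rankLabel X ρ (S.topEdge r) + S.rankLabel X ρ (S.topEdge z) := by
  have habove {e : C × ℕ} (he : e ∈ S.edges) (hlt : S.key X ρ (S.topEdge r) < S.key X ρ e) :=
    hρ.cases_of_key_topEdge_lt hr (by tauto) heven (S.mem_edges.1 he) hlt
  have hbelow {c : C} {i : ℕ} (hc : S.tier X (c, i) = 0) (hcX : X c ∨ S.len r % 2 = 0) :
      S.key X ρ (c, i) < S.key X ρ (S.topEdge z) := by
    have := S.len_pos z
    have := hρ.lt_spine c
    have := hρ.spine_lt z hz
    have := hρ.odd_of_mem r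
    rw [key_lt_key, hc]
    grind [tier, topEdge]
  let φ : C × ℕ → C × ℕ := fun e =>
    if e.1 = S.spine then (r, 0) else if S.len e.1 % 2 = 0 then (e.1, e.2 - 1) else (e.1, 0)
  rw [← card_edges]
  refine card_lt_rankBy_add_rankBy (by simpa using S.topEdge_lt z) φ (fun e he hlt => ?_) ?_
  · have hX := hρ.odd_of_mem
    have hlen := S.len_pos
    rw [mem_edges] at he
    have : (φ e).2 < S.len (φ e).1 ∧ S.tier X (φ e) = 0 ∧ (X (φ e).1 ∨ S.len r % 2 = 0) := by
      have := habove (S.mem_edges.2 he) hlt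
      grind [tier]
    exact ⟨S.mem_edges.2 this.1, hbelow this.2.1 this.2.2⟩
  · rintro e ⟨he, hlt⟩ e' ⟨he', hlt'⟩ heq
    have := habove he hlt
    have := habove he' hlt'
    have := hρ.odd_of_mem
    grind

lemma centerSum_comp_swap_ne {b₀ b : Bool} {x y : C × ℕ} (hxy : g x ≠ g y)
    (hx : x ∈ S.star b₀ b) (hy : y ∉ S.star b₀ b)
    (hxy' : x ∈ S.star b₀ (!b) → y ∈ S.star b₀ (!b))
    (htie : S.centerSum b₀ g true = S.centerSum b₀ g false) :
    S.centerSum b₀ (g ∘ Equiv.swap x y) true ≠ S.centerSum b₀ (g ∘ Equiv.swap x y) false := by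
  have hb := sum_comp_swap (S.star b₀ b) g x y
  have hb' := sum_comp_swap (S.star b₀ (!b)) g x y
  simp only [centerSum, Function.comp] at *
  cases b <;> simp only [Bool.not_true, Bool.not_false] at * <;> grind

lemma exists_centerSum_ne (hne : g (S.spine, 0) ≠ g (S.topEdge S.spine)) :
    ∃ b₀, S.centerSum b₀ g true ≠ S.centerSum b₀ g false := by
  by_contra! h
  have htrue := h true
  have hfalse := h false
  simp only [centerSum_eq, endIdx, reduceCtorEq, if_true, if_false] at htrue hfalse
  simp only [topEdge] at *
  omega

lemma IsAligned.eq_topEdge_of_add_one_eq_size (hg : S.IsAligned X ρ g) (hρ : S.IsOrder X ρ) {r : C}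
    (hr : r ≠ S.spine) (hrX : X r ∨ S.len r % 2 = 0) (h1 : S.len S.spine = 1)
    (hspine : g (S.spine, 0) = S.size) {e : C × ℕ} (he : e.2 < S.len e.1)
    (hsize : g e + 1 = S.size) : e.1 ≠ S.spine ∧ e = S.topEdge e.1 := by
  obtain ⟨c, i⟩ := e
  have hlen := S.len_pos c
  have hrlen : 2 ≤ S.len r := hρ.two_le_len hrX
  have hne : (c, i) ≠ (S.spine, 0) := fun h => by
    rw [h] at hsize
    omega
  have hcS : c ≠ S.spine := by grind
  suffices h : i + 1 = S.len c from ⟨hcS, by simp [topEdge, ← h]⟩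
  by_contra hi
  have hmax {e' : C × ℕ} (he' : e'.2 < S.len e'.1) (hc' : e'.1 ≠ S.spine) (hne' : e' ≠ (c, i)) :
      g e' < g (c, i) := by
    have := hg.le_size he'
    have h1 : g e' ≠ g (c, i) := fun h => hne' (hg.eq_of_eq he' he h)
    have h2 : g e' ≠ g (S.spine, 0) := fun h =>
      hc' (congrArg Prod.fst (hg.eq_of_eq (e' := (S.spine, 0)) he' (S.len_pos _) h))
    omega
  have hkey : ¬S.key X ρ (c, i) < S.key X ρ (S.topEdge r) := fun h => by
    have := hg.lt_of_key_lt _ _ he (S.topEdge_lt r) (by grind) hrlen h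
    have := hmax (S.topEdge_lt r) hr fun h => by simp_all
    omega
  have hnext : i % 2 = 1 → ¬i + 2 < S.len c := fun hodd hlt => by
    have htier : S.tier X (c, i) = S.tier X (c, i + 2) := by
      rw [tier_of_odd hodd (by omega), tier_of_odd (by omega) (by omega)]
    have := hg.lt_of_index_lt hlt htier (by omega)
    have := hmax (e' := (c, i + 2)) hlt hcS (by simp)
    omega
  have htier := hρ.tier_topEdge (c := r)
  have := tier_topEdge_of_even (S := S) (X := X) (c := r)
  have := hρ.odd_lt_even c r hcS hr
  rw [key_lt_key] at hkey
  grind [tier, topEdge]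

lemma exists_rich_legs {b : Bool} (h : ∃ c ∈ S.legs b, 2 ≤ S.len c) :
    ∃ r ∈ S.legs b, ∃ z ∈ S.legs b, r ≠ z ∧ 2 ≤ S.len r ∧
      (S.len r % 2 = 1 ∨ S.len z = 1 ∨ S.len z % 2 = 0) := by
  obtain ⟨r, hr, hlen, hodd⟩ : ∃ r ∈ S.legs b, 2 ≤ S.len r ∧
      (S.len r % 2 = 1 ∨ ∀ z ∈ S.legs b, S.len z = 1 ∨ S.len z % 2 = 0) := by
    by_contra! hcon
    obtain ⟨c, hc, hc2⟩ := h
    obtain ⟨-, z, hz, hz1, hz2⟩ := hcon c hc hc2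
    have := (hcon z hz (by grind [S.len_pos z])).1
    omega
  obtain ⟨z, hne, hz⟩ := S.exists_leg_ne b r
  exact ⟨r, hr, z, S.mem_legs.2 hz, hne, hlen, hodd.imp_right fun h => h z (S.mem_legs.2 hz)⟩

lemma IsOrder.exists_isAntimagicFrom_of_len_ne_one (hρ : S.IsOrder X ρ) {r z : Bool → C}
    (hr : ∀ b, r b ∈ S.legs b) (hz : ∀ b, z b ∈ S.legs b) (hrz : ∀ b, r b ≠ z b)
    (hrX : ∀ b, X (r b) ∧ ¬X (z b) ∨
      S.len (r b) % 2 = 0 ∧ (S.len (z b) = 1 ∨ S.len (z b) % 2 = 0))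
    (h1 : S.len S.spine ≠ 1) : ∃ b₀ g, S.IsAntimagicFrom b₀ g := by
  have hg := hρ.isAligned_rankLabel
  have hlen : 2 ≤ S.len S.spine := by grind [S.len_pos S.spine]
  obtain ⟨b₀, hne⟩ : ∃ b₀, S.centerSum b₀ (S.rankLabel X ρ) true ≠
      S.centerSum b₀ (S.rankLabel X ρ) false := exists_centerSum_ne fun h => by
    have := (Prod.mk.inj (hg.eq_of_eq (e := (S.spine, 0)) (S.len_pos _) (S.topEdge_lt _) h)).2
    omega
  refine ⟨b₀, _, hg.isAntimagicFrom hρ ⟨_, hlen⟩ (fun b c i hi => ?_) hne⟩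
  have hend : S.endIdx b₀ b = 0 ∨ S.endIdx b₀ b = S.len S.spine - 1 := by grind [endIdx]
  rcases Nat.mod_two_eq_zero_or_one (S.len S.spine) with heven | hodd
  · refine hg.pair_lt_centerSum_of_even hρ (hr b) (hz b) (hrz b) heven ?_
      (hρ.size_lt_rankLabel_add_rankLabel (S.mem_legs.1 (hr b)).1 (S.mem_legs.1 (hz b)).1 heven
        (hrX b)) hi
    rcases hend with h | h <;> rw [h]
    · rw [hρ.rankLabel_spine_zero (.inl heven)]
      exact hg.le_size (S.topEdge_lt _)
    · rfl
  · refine hg.pair_lt_centerSum_of_size_le hρ (hr b) (hz b) (hrz b) ((hrX b).imp And.left And.left)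
      ?_ hi
    rcases hend with h | h <;> rw [h]
    · exact hρ.size_le_rankLabel_spine_zero_add_one
    · exact (hρ.rankLabel_topEdge_spine hodd).ge.trans (Nat.le_succ _)

lemma IsOrder.exists_isAntimagicFrom_of_len_eq_one (hρ : S.IsOrder X ρ) {r z : Bool → C}
    (hr : ∀ b, r b ∈ S.legs b) (hz : ∀ b, z b ∈ S.legs b) (hrz : ∀ b, r b ≠ z b)
    (hrX : ∀ b, X (r b) ∨ S.len (r b) % 2 = 0) (h1 : S.len S.spine = 1) :
    ∃ b₀ g, S.IsAntimagicFrom b₀ g := by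
  have hend (b : Bool) : S.endIdx true b = 0 := by grind [endIdx]
  have hantimagic {g : C × ℕ → ℕ} (hg : S.IsAligned X ρ g) (hsize : S.size ≤ g (S.spine, 0) + 1)
      (hne : S.centerSum true g true ≠ S.centerSum true g false) : S.IsAntimagicFrom true g :=
    hg.isAntimagicFrom hρ ⟨_, hρ.two_le_len (hrX true)⟩ (fun b c i hi =>
      hg.pair_lt_centerSum_of_size_le hρ (hr b) (hz b) (hrz b) (hrX b) (by rwa [hend]) hi) hne
  have hg := hρ.isAligned_rankLabel
  have hspine := hρ.rankLabel_spine_zero (.inr h1)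
  by_cases htie : S.centerSum true (S.rankLabel X ρ) true = S.centerSum true (S.rankLabel X ρ) false
  · have hsize : 2 ≤ S.size := (hρ.two_le_len (hrX true)).trans
      (Finset.single_le_sum (fun _ _ => Nat.zero_le _) (Finset.mem_univ _))
    obtain ⟨y, hy, hylabel⟩ := hg.exists_eq (k := S.size - 1) (by omega) (by omega)
    obtain ⟨hyspine, hytop⟩ := hg.eq_topEdge_of_add_one_eq_size hρ (S.mem_legs.1 (hr true)).1
      (hrX true) h1 hspine hy (by omega)
    refine ⟨true, _, hantimagic (hg.comp_swap (x := (S.spine, 0)) (S.len_pos _) hy h1 (by omega))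
      ?_ ?_⟩
    · simp only [Function.comp, Equiv.swap_apply_left]
      omega
    · have hx (b : Bool) : (S.spine, 0) ∈ S.star true b := S.mem_star.2 (.inl (by rw [hend]))
      refine centerSum_comp_swap_ne (b := !S.side y.1) (by omega) (hx _) ?_ (fun _ => ?_) htie
      · rw [mem_star]
        grind
      · rw [mem_star]
        grind [topEdge, S.len_pos y.1]
  · exact ⟨true, _, hantimagic hg (by omega) htie⟩

lemma exists_isAntimagicFrom_of_forall_long (h : ∀ b, ∃ c ∈ S.legs b, 2 ≤ S.len c) :
    ∃ b₀ g, S.IsAntimagicFrom b₀ g := by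
  choose r hr z hz hrz hlen hodd using fun b => exists_rich_legs (h b)
  let X : C → Prop := fun c => ∃ b, c = r b ∧ S.len c % 2 = 1
  have hX (c : C) (hc : X c) : c ≠ S.spine ∧ S.len c % 2 = 1 ∧ 3 ≤ S.len c := by
    obtain ⟨b, rfl, hc⟩ := hc
    exact ⟨(S.mem_legs.1 (hr b)).1, hc, by grind⟩
  obtain ⟨ρ, hρ, -⟩ := S.exists_isOrder (fun _ => False) hX
  have hzX (b : Bool) : ¬X (z b) := by
    rintro ⟨b', hb', -⟩
    have : b' = b := (S.mem_legs.1 (hr b')).2.symm.trans (hb' ▸ (S.mem_legs.1 (hz b)).2)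
    exact hrz b (this ▸ hb').symm
  have hrX (b : Bool) : X (r b) ∧ ¬X (z b) ∨
      S.len (r b) % 2 = 0 ∧ (S.len (z b) = 1 ∨ S.len (z b) % 2 = 0) := by
    rcases Nat.mod_two_eq_zero_or_one (S.len (r b)) with heven | h1
    · exact .inr ⟨heven, (hodd b).resolve_left (by omega)⟩
    · exact .inl ⟨⟨b, rfl, h1⟩, hzX b⟩
  by_cases h1 : S.len S.spine = 1
  · exact hρ.exists_isAntimagicFrom_of_len_eq_one hr hz hrz
      (fun b => (hrX b).imp And.left And.left) h1
  · exact hρ.exists_isAntimagicFrom_of_len_ne_one hr hz hrz hrX h1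

end SpiderShape

/-! ### Only pendant legs at one center -/

namespace SpiderShape

variable {C : Type*} {S : SpiderShape C} {X : C → Prop} {ρ : C → ℕ} {g : C × ℕ → ℕ} {a : Bool}
  {r z : C} {e : C × ℕ} [Fintype C]

/-- The edges that receive the smallest labels: those of tier `0` and the pendant edges. -/
def lowEdges (S : SpiderShape C) (X : C → Prop) : Finset (C × ℕ) :=
  S.edges.filter fun e => S.tier X e ≤ 1

/-- The low edges that do not lie on the spine or on a leg in `X`. -/
def freeLowEdges (S : SpiderShape C) (X : C → Prop) : Finset (C × ℕ) :=
  (S.lowEdges X).filter fun e => e.1 ≠ S.spine ∧ ¬X e.1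

lemma mem_lowEdges : e ∈ S.lowEdges X ↔ e.2 < S.len e.1 ∧ S.tier X e ≤ 1 := by
  simp [lowEdges]

lemma mem_freeLowEdges : e ∈ S.freeLowEdges X ↔
    (e.2 < S.len e.1 ∧ S.tier X e ≤ 1) ∧ e.1 ≠ S.spine ∧ ¬X e.1 := by
  simp [freeLowEdges, mem_lowEdges]

lemma lowEdges_subset_edges : S.lowEdges X ⊆ S.edges :=
  Finset.filter_subset _ _

lemma card_lowEdges_lt_size : (S.lowEdges X).card < S.size := by
  rw [← card_edges]
  refine Finset.card_lt_card ((Finset.ssubset_iff_of_subset lowEdges_subset_edges).2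
    ⟨(S.spine, 0), S.mem_edges.2 (S.len_pos _), fun he => ?_⟩)
  have := (mem_lowEdges.1 he).2
  rw [tier_spine_zero] at this
  omega

lemma card_freeLowEdges_le : (S.freeLowEdges X).card ≤ (S.lowEdges X).card :=
  Finset.card_filter_le _ _

lemma rankLabel_le_card_lowEdges (h : S.tier X e ≤ 1) :
    S.rankLabel X ρ e ≤ (S.lowEdges X).card := by
  refine Finset.card_le_card fun e' he' => ?_
  obtain ⟨he', hle⟩ := Finset.mem_filter.1 he'
  have : S.tier X e' ≤ S.tier X e := by
    rw [← not_lt, key_lt_key] at hle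
    omega
  exact Finset.mem_filter.2 ⟨he', this.trans h⟩

lemma IsAligned.le_card_lowEdges (hg : S.IsAligned X ρ g) (hρ : S.IsOrder X ρ)
    (hgf : ∀ e, 2 ≤ S.tier X e → g e = S.rankLabel X ρ e) (he : e.2 < S.len e.1)
    (h : S.tier X e ≤ 1) : g e ≤ (S.lowEdges X).card := by
  by_contra! hlt
  obtain ⟨e', he', heq⟩ := hρ.isAligned_rankLabel.exists_eq (hg.pos he) (hg.le_size he)
  have htier : 2 ≤ S.tier X e' := by
    by_contra! hlow
    exact (heq ▸ rankLabel_le_card_lowEdges (by omega)).not_gt hlt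
  have : e = e' := hg.eq_of_eq he he' (heq ▸ (hgf e' htier).symm)
  subst this
  omega

/-- Apart from the edge `(spine, 1)`, the edges of tier `2` on the spine and on the legs in `X` are
matched with the low edges before them. -/
lemma IsOrder.rankLabel_add_card_freeLowEdges_le (hρ : S.IsOrder X ρ)
    (hlen : 2 ≤ S.len e.1) (hodd : e.2 % 2 = 1) (hX : e.1 = S.spine ∨ X e.1) :
    S.rankLabel X ρ e + (S.freeLowEdges X).card ≤ 2 * (S.lowEdges X).card + 1 := by
  let H : Finset (C × ℕ) :=
    S.edges.filter fun e => e.2 % 2 = 1 ∧ (e.1 = S.spine ∨ X e.1)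
  have hrank : S.rankLabel X ρ e ≤ (S.lowEdges X ∪ H).card := by
    refine Finset.card_le_card fun e' he' => ?_
    obtain ⟨he', hle⟩ := Finset.mem_filter.1 he'
    have := hρ.lt_spine e.1
    have := hρ.spine_lt e'.1
    rw [← not_lt, key_lt_key, tier_of_odd hodd hlen] at hle
    simp only [H, Finset.mem_union, mem_lowEdges, Finset.mem_filter, mem_edges] at he' ⊢
    grind [tier]
  have hH : (H.erase (S.spine, 1)).card ≤
      ((S.lowEdges X).filter fun e => ¬(e.1 ≠ S.spine ∧ ¬X e.1)).card := by
    refine Finset.card_le_card_of_injOn (fun e => (e.1, e.2 - 1)) (fun e' he' => ?_) ?_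
    · have := hρ.odd_of_mem e'.1
      simp only [H, Finset.coe_erase, Set.mem_sdiff, Finset.mem_coe, Finset.mem_filter,
        mem_edges, mem_lowEdges, Set.mem_singleton_iff] at he' ⊢
      grind [tier]
    · rintro e₁ he₁ e₂ he₂ heq
      simp only [H, Finset.coe_erase, Set.mem_sdiff, Finset.mem_coe, Finset.mem_filter] at he₁ he₂
      grind
  have := Finset.card_union_le (S.lowEdges X) H
  have := Finset.pred_card_le_card_erase (s := H) (a := (S.spine, 1))
  have := Finset.card_filter_add_card_filter_not (s := S.lowEdges X)
    fun e => e.1 ≠ S.spine ∧ ¬X e.1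
  rw [freeLowEdges]
  omega

lemma IsAligned.pair_lt_centerSum_of_pendants (hg : S.IsAligned X ρ g) (hρ : S.IsOrder X ρ)
    (hgf : ∀ e, 2 ≤ S.tier X e → g e = S.rankLabel X ρ e) {b₀ : Bool}
    (hend : g (S.spine, S.endIdx b₀ a) = S.size) {s₁ s₂ : C} (hs₁ : s₁ ∈ S.legs a)
    (hs₂ : s₂ ∈ S.legs a) (hne : s₁ ≠ s₂)
    (hlabels : 2 * (S.lowEdges X).card + 1 <
      g (S.topEdge s₁) + g (S.topEdge s₂) + (S.freeLowEdges X).card)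
    {c : C} {i : ℕ} (hi : i + 1 < S.len c) :
    g (c, i) + g (c, i + 1) < S.centerSum b₀ g a := by
  have hpair : g (c, i) + g (c, i + 1) ≤ g (S.topEdge s₁) + g (S.topEdge s₂) - 1 + S.size := by
    refine hg.pair_le_add_size (fun c i _ hc hodd hcX => ?_) (fun c i hi _ hzero => ?_) hi
    · have := hρ.rankLabel_add_card_freeLowEdges_le (e := (c, i)) hc hodd hcX
      rw [hgf _ (tier_of_odd hodd hc).ge]
      omega
    · have := hg.le_card_lowEdges hρ hgf (e := (c, i)) hi (by omega)
      have := card_freeLowEdges_le (S := S) (X := X)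
      omega
  have := add_add_le_centerSum hs₁ hs₂ hne b₀ g
  have := hg.pos (S.topEdge_lt s₁)
  omega

end SpiderShape

namespace SpiderShape

variable {C : Type*} {S : SpiderShape C} {X : C → Prop} {ρ : C → ℕ} {g : C × ℕ → ℕ} {a : Bool}
  {r z : C} {e : C × ℕ}

/-- An order for a shape all of whose legs at the center `a` are pendant edges, whereas the leg `r`
at the other center is long. -/
structure IsPoorOrder (S : SpiderShape C) (X : C → Prop) (ρ : C → ℕ) (a : Bool) (r : C) : Prop
    extends S.IsOrder X ρ where
  len_eq_one : ∀ c, c ≠ S.spine → S.side c = a → S.len c = 1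
  ne_spine : r ≠ S.spine
  side_eq : S.side r = !a
  mem_or_even : X r ∨ S.len r % 2 = 0
  eq_of_mem : ∀ c, X c → c = r
  lt_of_even : ∀ c, c ≠ S.spine → c ≠ r → S.len c % 2 = 0 → ρ c < ρ r

/-- The center from which the spine is listed so that its edge with the largest label is at the
center `a`. -/
def startFor (S : SpiderShape C) (a : Bool) : Bool :=
  if S.len S.spine % 2 = 0 then a else !a

lemma endIdx_startFor_of_even (heven : S.len S.spine % 2 = 0) (a : Bool) :
    S.endIdx (S.startFor a) a = 0 ∧ S.endIdx (S.startFor a) (!a) = S.len S.spine - 1 := by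
  simp [endIdx, startFor, heven]

lemma endIdx_startFor_of_odd (hodd : S.len S.spine % 2 = 1) (a : Bool) :
    S.endIdx (S.startFor a) a = S.len S.spine - 1 ∧ S.endIdx (S.startFor a) (!a) = 0 := by
  simp [endIdx, startFor, hodd]

lemma tier_endIdx_startFor : S.tier X (S.spine, S.endIdx (S.startFor a) a) = 3 := by
  have := S.len_pos S.spine
  rcases Nat.mod_two_eq_zero_or_one (S.len S.spine) with heven | hodd
  · rw [(endIdx_startFor_of_even heven a).1, tier_spine_zero]
  · rw [(endIdx_startFor_of_odd hodd a).1]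
    grind [tier]

namespace IsPoorOrder

lemma eq_of_key_topEdge_lt (h : S.IsPoorOrder X ρ a r) (he : e.2 < S.len e.1)
    (hlt : S.key X ρ (S.topEdge r) < S.key X ρ e) :
    e = (S.spine, 0) ∨ e = S.topEdge S.spine ∧ S.len S.spine % 2 = 1 ∧ S.len S.spine ≠ 1 := by
  obtain ⟨c, i⟩ := e
  have hr := h.ne_spine
  have hmem := h.eq_of_mem c
  have htier := tier_le_three (S := S) (X := X) (c, i)
  rw [key_lt_key] at hlt
  rcases h.mem_or_even with hX | heven
  · rw [h.tier_topEdge hX] at hlt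
    have := h.odd_of_mem r hX
    have : S.tier X (c, i) = 3 := by omega
    grind [tier, topEdge]
  · rw [tier_topEdge_of_even heven] at hlt
    have hspine : ρ S.spine < ρ r := h.toIsOrder.lt_of_even hr heven (.inl rfl)
    have hlegs := h.lt_of_even c
    have hmem' := h.odd_of_mem r
    have hodd := h.odd_lt_even c r
    simp only [topEdge] at hlt ⊢
    by_cases hc : c = S.spine
    · grind [tier]
    · by_cases c = r <;> grind [tier]

lemma two_le_tier_topEdge (h : S.IsPoorOrder X ρ a r) : 2 ≤ S.tier X (S.topEdge r) := by
  rcases h.mem_or_even with hr | hr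
  · rw [h.tier_topEdge hr]
    omega
  · rw [tier_topEdge_of_even hr]

variable [Fintype C]

lemma mem_legs (h : S.IsPoorOrder X ρ a r) : r ∈ S.legs (!a) :=
  S.mem_legs.2 ⟨h.ne_spine, h.side_eq⟩

lemma size_le_rankLabel_topEdge_add_two (h : S.IsPoorOrder X ρ a r) :
    S.size ≤ S.rankLabel X ρ (S.topEdge r) + 2 := by
  rw [← card_edges]
  refine (card_le_rankBy_add_card (K := S.key X ρ) subset_rfl {(S.spine, 0), S.topEdge S.spine}
    fun e he hlt => ?_).trans (Nat.add_le_add_left Finset.card_le_two _)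
  rcases h.eq_of_key_topEdge_lt (S.mem_edges.1 he) hlt with rfl | ⟨rfl, -⟩ <;> simp

lemma size_le_rankLabel_topEdge_add_one (h : S.IsPoorOrder X ρ a r)
    (hlen : S.len S.spine % 2 = 0 ∨ S.len S.spine = 1) :
    S.size ≤ S.rankLabel X ρ (S.topEdge r) + 1 := by
  rw [← card_edges]
  refine card_le_rankBy_add_card (K := S.key X ρ) subset_rfl {(S.spine, 0)} fun e he hlt => ?_
  have := h.eq_of_key_topEdge_lt (S.mem_edges.1 he) hlt
  grind

lemma rankLabel_endIdx (h : S.IsPoorOrder X ρ a r) :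
    S.rankLabel X ρ (S.spine, S.endIdx (S.startFor a) a) = S.size := by
  rcases Nat.mod_two_eq_zero_or_one (S.len S.spine) with heven | hodd
  · rw [(endIdx_startFor_of_even heven a).1, h.rankLabel_spine_zero (.inl heven)]
  · rw [(endIdx_startFor_of_odd hodd a).1]
    exact h.rankLabel_topEdge_spine hodd

lemma pair_lt_centerSum_not (h : S.IsPoorOrder X ρ a r) (hg : S.IsAligned X ρ g)
    (hgf : ∀ e, 2 ≤ S.tier X e → g e = S.rankLabel X ρ e) (hz : z ∈ S.legs (!a)) (hrz : r ≠ z)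
    (hztop : 2 ≤ g (S.topEdge z)) {c : C} {i : ℕ} (hi : i + 1 < S.len c) :
    g (c, i) + g (c, i + 1) < S.centerSum (S.startFor a) g (!a) := by
  rcases Nat.mod_two_eq_zero_or_one (S.len S.spine) with heven | hodd
  · refine hg.pair_lt_centerSum_of_even h.toIsOrder h.mem_legs hz hrz heven ?_ ?_ hi
    · rw [(endIdx_startFor_of_even heven a).2, topEdge]
    · have := h.size_le_rankLabel_topEdge_add_one (.inl heven)
      rw [hgf _ h.two_le_tier_topEdge]
      omega
  · refine hg.pair_lt_centerSum_of_size_le h.toIsOrder h.mem_legs hz hrz h.mem_or_even ?_ hi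
    rw [(endIdx_startFor_of_odd hodd a).2, hgf _ (by simp [tier_spine_zero])]
    exact h.size_le_rankLabel_spine_zero_add_one

lemma two_le_rankLabel_topEdge (h : S.IsPoorOrder X ρ a r) (hz : z ≠ S.spine) :
    2 ≤ S.rankLabel X ρ (S.topEdge z) := by
  obtain ⟨c, hlt⟩ : ∃ c, S.key X ρ (c, 0) < S.key X ρ (S.topEdge z) := by
    have := h.two_le_len h.mem_or_even
    have := h.odd_of_mem r
    have := h.ne_spine
    have := h.odd_of_mem z
    have := h.eq_of_mem z
    have := S.len_pos z
    refine ⟨if S.len z = 1 then r else z, ?_⟩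
    rw [key_lt_key]
    grind [tier, topEdge]
  have := rankLabel_lt_rankLabel (S.topEdge_lt z) hlt
  have := h.isAligned_rankLabel.pos (e := (c, 0)) (S.len_pos c)
  omega

lemma isAntimagicFrom (h : S.IsPoorOrder X ρ a r) (hg : S.IsAligned X ρ g)
    (hgf : ∀ e, 2 ≤ S.tier X e → g e = S.rankLabel X ρ e)
    (hz : z ∈ S.legs (!a)) (hrz : r ≠ z) (hztop : 2 ≤ g (S.topEdge z))
    {s₁ s₂ : C} (hs₁ : s₁ ∈ S.legs a) (hs₂ : s₂ ∈ S.legs a) (hne : s₁ ≠ s₂)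
    (hlabels : 2 * (S.lowEdges X).card + 1 <
      g (S.topEdge s₁) + g (S.topEdge s₂) + (S.freeLowEdges X).card)
    (hcenters : S.centerSum (S.startFor a) g true ≠ S.centerSum (S.startFor a) g false) :
    S.IsAntimagicFrom (S.startFor a) g := by
  refine hg.isAntimagicFrom h.toIsOrder ⟨r, h.two_le_len h.mem_or_even⟩
    (fun b c i hi => ?_) hcenters
  obtain rfl | rfl : b = a ∨ b = !a := by cases a <;> cases b <;> simp
  · refine hg.pair_lt_centerSum_of_pendants h.toIsOrder hgf ?_ hs₁ hs₂ hne hlabels hi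
    rw [hgf _ (by rw [tier_endIdx_startFor]; omega), h.rankLabel_endIdx]
  · exact h.pair_lt_centerSum_not hg hgf hz hrz hztop hi

end IsPoorOrder

end SpiderShape

namespace SpiderShape

variable {C : Type*} {S : SpiderShape C} {X : C → Prop} {ρ : C → ℕ} {g : C × ℕ → ℕ} {a : Bool}
  {r z s s₁ s₂ : C} {e : C × ℕ}

lemma ne_of_mem_legs [Fintype C] (hs : s ∈ S.legs a) (hz : z ∈ S.legs (!a)) : s ≠ z := by
  rintro rfl
  simpa [(S.mem_legs.1 hs).2] using (S.mem_legs.1 hz).2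

lemma key_topEdge_lt_of_pendant (hs : s ≠ S.spine) (h1 : S.len s = 1) (he : e.2 < S.len e.1)
    (hlow : S.tier X e ≤ 1) (hlt : S.key X ρ (S.topEdge s) < S.key X ρ e) :
    e = S.topEdge e.1 ∧ e.1 ≠ S.spine ∧ S.len e.1 = 1 ∧ ρ s < ρ e.1 := by
  obtain ⟨c, i⟩ := e
  rw [key_lt_key, topEdge, tier_of_pendant hs h1] at hlt
  grind [tier, topEdge]

variable [Fintype C]

lemma card_lowEdges_le_rankLabel_topEdge_add (hs : s ≠ S.spine) (h1 : S.len s = 1) (T : Finset C)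
    (hT : ∀ c, c ≠ S.spine → S.len c = 1 → ρ s < ρ c → c ∈ T) :
    (S.lowEdges X).card ≤ S.rankLabel X ρ (S.topEdge s) + T.card := by
  refine (card_le_rankBy_add_card (K := S.key X ρ) lowEdges_subset_edges (T.image S.topEdge)
    fun e he hlt => ?_).trans (Nat.add_le_add_left Finset.card_image_le _)
  obtain ⟨he, hlow⟩ := mem_lowEdges.1 he
  obtain ⟨heq, hc, hlen, hρ⟩ := key_topEdge_lt_of_pendant hs h1 he hlow hlt
  exact Finset.mem_image.2 ⟨e.1, hT e.1 hc hlen hρ, heq.symm⟩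

namespace IsPoorOrder

lemma exists_pendants (h : S.IsPoorOrder X ρ a r)
    (htop : ∀ c ∈ S.legs (!a), S.len c = 1 → ∀ s ∈ S.legs a, ρ c < ρ s) :
    ∃ s₁ ∈ S.legs a, ∃ s₂ ∈ S.legs a, s₁ ≠ s₂ ∧
      (S.lowEdges X).card ≤ S.rankLabel X ρ (S.topEdge s₁) ∧
      (S.lowEdges X).card ≤ S.rankLabel X ρ (S.topEdge s₂) + 1 := by
  obtain ⟨c, c', hcc', hc, hc', hca, hca'⟩ := S.exists_two_legs a
  obtain ⟨s₁, hs₁, hmax₁⟩ := (S.legs a).exists_max_image ρ ⟨c, S.mem_legs.2 ⟨hc, hca⟩⟩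
  obtain ⟨s₂, hs₂, hmax₂⟩ := ((S.legs a).erase s₁).exists_max_image ρ <| by
    by_cases hcs : c = s₁
    · exact ⟨c', by simp [hc', hca', ← hcs, hcc'.symm]⟩
    · exact ⟨c, by simp [hc, hca, hcs]⟩
  obtain ⟨hne, hs₂⟩ := Finset.mem_erase.1 hs₂
  have habove : ∀ s ∈ S.legs a, ∀ c, c ≠ S.spine → S.len c = 1 → ρ s < ρ c → c ∈ S.legs a := by
    intro s hs c hc h1 hlt
    by_contra hca
    have hca : S.side c = !a := Bool.eq_not_of_ne fun hside => hca (S.mem_legs.2 ⟨hc, hside⟩)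
    exact (htop c (S.mem_legs.2 ⟨hc, hca⟩) h1 s hs).not_gt hlt
  obtain ⟨hs₁', hsa₁⟩ := S.mem_legs.1 hs₁
  obtain ⟨hs₂', hsa₂⟩ := S.mem_legs.1 hs₂
  refine ⟨s₁, hs₁, s₂, hs₂, hne.symm, ?_, ?_⟩
  · exact card_lowEdges_le_rankLabel_topEdge_add hs₁' (h.len_eq_one s₁ hs₁' hsa₁) ∅
      fun c hc h1 hlt => absurd (hmax₁ c (habove s₁ hs₁ c hc h1 hlt)) hlt.not_ge
  · refine card_lowEdges_le_rankLabel_topEdge_add hs₂' (h.len_eq_one s₂ hs₂' hsa₂) {s₁}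
      fun c hc h1 hlt => Finset.mem_singleton.2 ?_
    by_contra hcs
    exact (hmax₂ c (Finset.mem_erase.2 ⟨hcs, habove s₂ hs₂ c hc h1 hlt⟩)).not_gt hlt

lemma leaves_subset_freeLowEdges (h : S.IsPoorOrder X ρ a r) (hs₁ : s₁ ∈ S.legs a)
    (hs₂ : s₂ ∈ S.legs a) (hz : z ∈ S.legs (!a)) (hrz : r ≠ z) :
    {(s₁, 0), (s₂, 0), (z, 0)} ⊆ S.freeLowEdges X := by
  have hleaf {c : C} (hc : c ≠ S.spine) (hr : r ≠ c) : (c, 0) ∈ S.freeLowEdges X :=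
    mem_freeLowEdges.2
      ⟨⟨S.len_pos c, h.tier_leaf_le_one hc⟩, hc, fun hX => hr (h.eq_of_mem c hX).symm⟩
  have hr {s : C} (hs : s ∈ S.legs a) : r ≠ s := (ne_of_mem_legs hs h.mem_legs).symm
  simp only [Finset.insert_subset_iff, Finset.singleton_subset_iff]
  exact ⟨hleaf (S.mem_legs.1 hs₁).1 (hr hs₁), hleaf (S.mem_legs.1 hs₂).1 (hr hs₂),
    hleaf (S.mem_legs.1 hz).1 hrz⟩

lemma card_leaves (hs₁ : s₁ ∈ S.legs a) (hs₂ : s₂ ∈ S.legs a) (hne : s₁ ≠ s₂)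
    (hz : z ∈ S.legs (!a)) : ({(s₁, 0), (s₂, 0), (z, 0)} : Finset (C × ℕ)).card = 3 := by
  rw [Finset.card_eq_three]
  exact ⟨_, _, _, by simpa, by simpa using ne_of_mem_legs hs₁ hz,
    by simpa using ne_of_mem_legs hs₂ hz, rfl⟩

lemma three_le_card_freeLowEdges (h : S.IsPoorOrder X ρ a r) (hs₁ : s₁ ∈ S.legs a)
    (hs₂ : s₂ ∈ S.legs a) (hne : s₁ ≠ s₂) (hz : z ∈ S.legs (!a)) (hrz : r ≠ z) :
    3 ≤ (S.freeLowEdges X).card :=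
  (card_leaves hs₁ hs₂ hne hz).ge.trans
    (Finset.card_le_card (h.leaves_subset_freeLowEdges hs₁ hs₂ hz hrz))

lemma eq_of_card_freeLowEdges_le_three (h : S.IsPoorOrder X ρ a r) (hs₁ : s₁ ∈ S.legs a)
    (hs₂ : s₂ ∈ S.legs a) (hne : s₁ ≠ s₂) (hz : z ∈ S.legs (!a)) (hrz : r ≠ z)
    (heven : S.len r % 2 = 0 ∨ S.len z % 2 = 1) (hL : (S.freeLowEdges X).card ≤ 3) :
    X r ∧ S.len z = 1 ∧ ∀ c, c = S.spine ∨ c = s₁ ∨ c = s₂ ∨ c = r ∨ c = z := by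
  have heq := Finset.eq_of_subset_of_card_le (h.leaves_subset_freeLowEdges hs₁ hs₂ hz hrz)
    (hL.trans (card_leaves hs₁ hs₂ hne hz).ge)
  have hmem (e : C × ℕ) (he : e ∈ S.freeLowEdges X) : e = (s₁, 0) ∨ e = (s₂, 0) ∨ e = (z, 0) := by
    simpa [← heq] using he
  have hleaf (c : C) (hc : c ≠ S.spine) (hX : ¬X c) : c = s₁ ∨ c = s₂ ∨ c = z := by
    simpa using hmem (c, 0) (mem_freeLowEdges.2 ⟨⟨S.len_pos c, h.tier_leaf_le_one hc⟩, hc, hX⟩)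
  have hrX : X r := by
    by_contra hX
    have := hleaf r h.ne_spine hX
    have := h.side_eq
    have := (S.mem_legs.1 hs₁).2
    have := (S.mem_legs.1 hs₂).2
    grind
  have hzX : ¬X z := fun hX => hrz (h.eq_of_mem z hX).symm
  have hz' := (S.mem_legs.1 hz).1
  refine ⟨hrX, ?_, fun c => ?_⟩
  · by_contra h1
    have := h.odd_of_mem r hrX
    have := hmem (z, 2) (mem_freeLowEdges.2 ⟨by grind [tier, S.len_pos z], hz', hzX⟩)
    grind
  · have := hleaf c
    have := h.eq_of_mem c
    grind

lemma isAntimagicFrom_rankLabel (h : S.IsPoorOrder X ρ a r) (hs₁ : s₁ ∈ S.legs a)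
    (hs₂ : s₂ ∈ S.legs a) (hne : s₁ ≠ s₂)
    (hM₁ : (S.lowEdges X).card ≤ S.rankLabel X ρ (S.topEdge s₁))
    (hM₂ : (S.lowEdges X).card ≤ S.rankLabel X ρ (S.topEdge s₂) + 1) (hz : z ∈ S.legs (!a))
    (hrz : r ≠ z) (hcenters : S.centerSum (S.startFor a) (S.rankLabel X ρ) true ≠
      S.centerSum (S.startFor a) (S.rankLabel X ρ) false) :
    S.IsAntimagicFrom (S.startFor a) (S.rankLabel X ρ) := by
  have := h.three_le_card_freeLowEdges hs₁ hs₂ hne hz hrz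
  exact h.isAntimagicFrom h.isAligned_rankLabel (fun _ _ => rfl) hz hrz
    (h.two_le_rankLabel_topEdge (S.mem_legs.1 hz).1) hs₁ hs₂ hne (by omega) hcenters

lemma exists_rankLabel_topEdge_eq_add_one (h : S.IsPoorOrder X ρ a r) :
    ∃ s ∈ S.legs a, ∃ y, y.2 < S.len y.1 ∧ S.tier X y ≤ 1 ∧
      S.rankLabel X ρ (S.topEdge s) = S.rankLabel X ρ y + 1 ∧
      y ∉ S.star (S.startFor a) a := by
  obtain ⟨c, -, -, hc, -, hca, -⟩ := S.exists_two_legs a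
  obtain ⟨s, hs, hmin⟩ := (S.legs a).exists_min_image ρ ⟨c, S.mem_legs.2 ⟨hc, hca⟩⟩
  obtain ⟨hs', hsa⟩ := S.mem_legs.1 hs
  have hlen := h.len_eq_one s hs' hsa
  have hg := h.isAligned_rankLabel
  have h2 := h.two_le_rankLabel_topEdge hs'
  have hsize := hg.le_size (S.topEdge_lt s)
  obtain ⟨y, hy, hfy⟩ := hg.exists_eq (k := S.rankLabel X ρ (S.topEdge s) - 1) (by omega) (by omega)
  have hkey : ¬S.key X ρ (S.topEdge s) < S.key X ρ y := fun hlt => by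
    have := rankLabel_lt_rankLabel hy hlt
    omega
  have htier : S.tier X (S.topEdge s) = 1 := tier_of_pendant hs' hlen _
  refine ⟨s, hs, y, hy, ?_, by omega, fun hmem => ?_⟩
  · rw [key_lt_key] at hkey
    omega
  · rcases S.mem_star.1 hmem with rfl | ⟨hy', hya, htop⟩
    · rw [h.rankLabel_endIdx] at hfy
      omega
    · have hylen := h.len_eq_one y.1 hy' hya
      rcases (hmin y.1 (S.mem_legs.2 ⟨hy', hya⟩)).lt_or_eq with hlt | heq
      · exact hkey (key_lt_key.2 (.inr ⟨by rw [htier, tier_of_pendant hy' hylen], .inl hlt⟩))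
      · have : y = S.topEdge s := by grind [topEdge, h.injective heq]
        subst this
        omega

lemma isAntimagicFrom_of_tie (h : S.IsPoorOrder X ρ a r) (hs₁ : s₁ ∈ S.legs a)
    (hs₂ : s₂ ∈ S.legs a) (hne : s₁ ≠ s₂)
    (hM₁ : (S.lowEdges X).card ≤ S.rankLabel X ρ (S.topEdge s₁))
    (hM₂ : (S.lowEdges X).card ≤ S.rankLabel X ρ (S.topEdge s₂) + 1) (hz : z ∈ S.legs (!a))
    (hrz : r ≠ z) (hL : 4 ≤ (S.freeLowEdges X).card)
    (htie : S.centerSum (S.startFor a) (S.rankLabel X ρ) true =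
      S.centerSum (S.startFor a) (S.rankLabel X ρ) false) :
    ∃ g, S.IsAntimagicFrom (S.startFor a) g := by
  obtain ⟨s, hs, y, hy, hytier, hxy, hstar⟩ := h.exists_rankLabel_topEdge_eq_add_one
  obtain ⟨hs', hsa⟩ := S.mem_legs.1 hs
  have hg := h.isAligned_rankLabel
  have hlen := h.len_eq_one s hs' hsa
  have htier : S.tier X (S.topEdge s) = 1 := tier_of_pendant hs' hlen _
  have hswap (e : C × ℕ) : (S.rankLabel X ρ ∘ Equiv.swap (S.topEdge s) y) e =
      if e = S.topEdge s then S.rankLabel X ρ e - 1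
      else if e = y then S.rankLabel X ρ e + 1 else S.rankLabel X ρ e := by
    rw [Function.comp, Equiv.swap_apply_def]
    split_ifs with h₁ h₂
    · rw [h₁, hxy, Nat.add_sub_cancel]
    · rw [h₂, hxy]
    · rfl
  refine ⟨_, h.isAntimagicFrom (hg.comp_swap (S.topEdge_lt s) hy hlen hxy) (fun e he => ?_) hz hrz
    ?_ hs₁ hs₂ hne ?_ ?_⟩
  · grind
  · have hzs : S.topEdge z ≠ S.topEdge s := fun heq =>
      ne_of_mem_legs hs hz (Prod.mk.inj heq).1.symm
    have := h.two_le_rankLabel_topEdge (S.mem_legs.1 hz).1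
    grind
  · have : S.topEdge s₁ ≠ S.topEdge s₂ := fun heq => hne (Prod.mk.inj heq).1
    rw [hswap, hswap]
    grind
  · refine centerSum_comp_swap_ne (by omega) ?_ hstar (fun hmem => ?_) htie
    · exact Finset.mem_insert_of_mem (Finset.mem_image_of_mem _ hs)
    · rcases S.mem_star.1 hmem with heq | ⟨-, hside, -⟩
      · exact absurd (Prod.mk.inj heq).1 hs'
      · simp [topEdge, hsa] at hside

end IsPoorOrder

end SpiderShape

namespace SpiderShape

variable {C : Type*} [Fintype C] {S : SpiderShape C} {X : C → Prop} {ρ : C → ℕ} {a : Bool}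
  {r z s₁ s₂ : C}

/-- A shape with only two legs at each center: the pendant edges `s₁`, `s₂` at the center `a`, and
a leg `r` in `X` and the pendant edge `z` at the other center. -/
structure IsScarce (S : SpiderShape C) (X : C → Prop) (ρ : C → ℕ) (a : Bool) (r z s₁ s₂ : C) :
    Prop extends S.IsPoorOrder X ρ a r where
  mem_left : s₁ ∈ S.legs a
  mem_right : s₂ ∈ S.legs a
  ne : s₁ ≠ s₂
  mem_pendant : z ∈ S.legs (!a)
  ne_pendant : r ≠ z
  mem : X r
  pendant : S.len z = 1
  eq_or_eq : ∀ c, c = S.spine ∨ c = s₁ ∨ c = s₂ ∨ c = r ∨ c = z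

namespace IsScarce

lemma legs_eq (h : S.IsScarce X ρ a r z s₁ s₂) :
    S.legs a = {s₁, s₂} ∧ S.legs (!a) = {r, z} := by
  have := S.mem_legs.1 h.mem_left
  have := S.mem_legs.1 h.mem_right
  have := S.mem_legs.1 h.mem_pendant
  have := S.mem_legs.1 h.mem_legs
  constructor <;> ext c <;> have := h.eq_or_eq c <;>
    simp only [mem_legs, Finset.mem_insert, Finset.mem_singleton] <;> grind

lemma centerSum_left (h : S.IsScarce X ρ a r z s₁ s₂) :
    S.centerSum (S.startFor a) (S.rankLabel X ρ) a = S.size +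
      (S.rankLabel X ρ (S.topEdge s₁) + S.rankLabel X ρ (S.topEdge s₂)) := by
  rw [centerSum_eq, h.rankLabel_endIdx, h.legs_eq.1, Finset.sum_pair h.ne]

lemma centerSum_right (h : S.IsScarce X ρ a r z s₁ s₂) :
    S.centerSum (S.startFor a) (S.rankLabel X ρ) (!a) =
      S.rankLabel X ρ (S.spine, S.endIdx (S.startFor a) (!a)) +
        (S.rankLabel X ρ (S.topEdge r) + S.rankLabel X ρ (S.topEdge z)) := by
  rw [centerSum_eq, h.legs_eq.2, Finset.sum_pair h.ne_pendant]

lemma size_le_rankLabel_topEdge_spine_add_two (h : S.IsScarce X ρ a r z s₁ s₂)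
    (heven : S.len S.spine % 2 = 0) :
    S.size ≤ S.rankLabel X ρ (S.topEdge S.spine) + 2 := by
  rw [← card_edges]
  refine (card_le_rankBy_add_card (K := S.key X ρ) subset_rfl {(S.spine, 0), S.topEdge r}
    fun e he hlt => ?_).trans (Nat.add_le_add_left Finset.card_le_two _)
  obtain ⟨c, i⟩ := e
  have := h.lt_spine c
  have := h.eq_of_mem c
  have := h.eq_or_eq c
  have := h.len_eq_one c
  have := S.mem_legs.1 h.mem_left
  have := S.mem_legs.1 h.mem_right
  have := S.mem_legs.1 h.mem_pendant
  have := h.pendant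
  have := h.mem
  rw [key_lt_key, tier_topEdge_of_even heven] at hlt
  simp only [mem_edges, topEdge, Finset.mem_insert, Finset.mem_singleton, Prod.mk.injEq] at *
  by_cases c = S.spine <;> grind [tier]

lemma size_add_size_le (h : S.IsScarce X ρ a r z s₁ s₂) : S.size + S.size ≤
    S.rankLabel X ρ (S.spine, S.endIdx (S.startFor a) (!a)) + S.rankLabel X ρ (S.topEdge r) +
      if S.len S.spine = 1 then 1 else 3 := by
  rcases Nat.mod_two_eq_zero_or_one (S.len S.spine) with heven | hodd
  · have := h.size_le_rankLabel_topEdge_add_one (.inl heven)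
    have := h.size_le_rankLabel_topEdge_spine_add_two heven
    rw [(endIdx_startFor_of_even heven a).2, if_neg (by omega), ← topEdge]
    omega
  · rw [(endIdx_startFor_of_odd hodd a).2]
    split_ifs with h1
    · have := h.size_le_rankLabel_topEdge_add_one (.inr h1)
      have := h.rankLabel_spine_zero (.inr h1)
      omega
    · have := h.size_le_rankLabel_topEdge_add_two
      have := h.size_le_rankLabel_spine_zero_add_one
      omega

lemma card_lowEdges_add_le (h : S.IsScarce X ρ a r z s₁ s₂) (h2 : S.len S.spine ≠ 2) :
    (S.lowEdges X).card + (if S.len S.spine = 1 then 3 else 5) ≤ S.size := by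
  have hr := h.ne_spine
  have hodd := h.odd_of_mem r h.mem
  have hspine := S.len_pos S.spine
  have hcard {H : Finset (C × ℕ)} (hH : ∀ e ∈ H, e.2 < S.len e.1 ∧ 2 ≤ S.tier X e) :
      (S.lowEdges X).card + H.card ≤ S.size := by
    rw [← card_edges, ← Finset.card_union_of_disjoint]
    · refine Finset.card_le_card (Finset.union_subset lowEdges_subset_edges fun e he => ?_)
      exact S.mem_edges.2 (hH e he).1
    · refine Finset.disjoint_left.2 fun e he he' => ?_
      have := (hH e he').2
      have := (mem_lowEdges.1 he).2
      omega
  have hhigh := h.mem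
  split_ifs with h1
  · refine (Nat.add_le_add_left ?_ _).trans (hcard (H := {(S.spine, 0), (r, 1), S.topEdge r}) ?_)
    · rw [Finset.card_eq_three.2 ⟨_, _, _, ?_, ?_, ?_, rfl⟩] <;> grind [topEdge]
    · simp only [Finset.mem_insert, Finset.mem_singleton]
      grind [tier, topEdge]
  · refine (Nat.add_le_add_left ?_ _).trans
      (hcard (H := {(S.spine, 0), (S.spine, 1), S.topEdge S.spine, (r, 1), S.topEdge r}) ?_)
    · iterate 4 rw [Finset.card_insert_of_notMem (by grind [topEdge])]
      rw [Finset.card_singleton]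
    · simp only [Finset.mem_insert, Finset.mem_singleton]
      grind [tier, topEdge]

lemma centerSum_left_lt (h : S.IsScarce X ρ a r z s₁ s₂) (h2 : S.len S.spine ≠ 2) :
    S.centerSum (S.startFor a) (S.rankLabel X ρ) a <
      S.centerSum (S.startFor a) (S.rankLabel X ρ) (!a) := by
  obtain ⟨hs₁, hsa₁⟩ := S.mem_legs.1 h.mem_left
  obtain ⟨hs₂, hsa₂⟩ := S.mem_legs.1 h.mem_right
  obtain ⟨hz, -⟩ := S.mem_legs.1 h.mem_pendant
  have hlow {s : C} (hs : s ≠ S.spine) (hsa : S.side s = a) :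
      S.rankLabel X ρ (S.topEdge s) ≤ (S.lowEdges X).card :=
    rankLabel_le_card_lowEdges (tier_of_pendant hs (h.len_eq_one s hs hsa) _).le
  have hne : S.rankLabel X ρ (S.topEdge s₁) ≠ S.rankLabel X ρ (S.topEdge s₂) := fun heq =>
    h.ne (Prod.mk.inj (h.isAligned_rankLabel.eq_of_eq (S.topEdge_lt _) (S.topEdge_lt _) heq)).1
  have hztop : (S.lowEdges X).card ≤ S.rankLabel X ρ (S.topEdge z) + 2 := by
    refine (card_lowEdges_le_rankLabel_topEdge_add hz h.pendant {s₁, s₂}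
      fun c hc h1 hlt => ?_).trans (Nat.add_le_add_left Finset.card_le_two _)
    have := h.eq_or_eq c
    have := h.odd_of_mem r h.mem
    grind
  have := hlow hs₁ hsa₁
  have := hlow hs₂ hsa₂
  have := h.size_add_size_le
  have := h.card_lowEdges_add_le h2
  rw [h.centerSum_left, h.centerSum_right]
  split_ifs at * <;> omega

lemma size_mod_two (h : S.IsScarce X ρ a r z s₁ s₂) (h2 : S.len S.spine = 2) :
    S.size % 2 = 0 := by
  obtain ⟨hs₁, hsa₁⟩ := S.mem_legs.1 h.mem_left
  obtain ⟨hs₂, hsa₂⟩ := S.mem_legs.1 h.mem_right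
  obtain ⟨hz, hza⟩ := S.mem_legs.1 h.mem_pendant
  have huniv : (Finset.univ : Finset C) = {S.spine, s₁, s₂, r, z} := by
    ext c
    simpa using h.eq_or_eq c
  have hr := h.ne_spine
  have hra := h.side_eq
  have := h.odd_of_mem r h.mem
  have := h.ne
  have := h.ne_pendant
  rw [size, huniv, Finset.sum_insert (by grind), Finset.sum_insert (by grind),
    Finset.sum_insert (by grind), Finset.sum_pair h.ne_pendant, h2, h.len_eq_one s₁ hs₁ hsa₁,
    h.len_eq_one s₂ hs₂ hsa₂, h.pendant]
  omega

lemma pair_eq_or_add_two_le (h : S.IsScarce X ρ a r z s₁ s₂) (h2 : S.len S.spine = 2) {c : C}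
    {i : ℕ} (hi : i + 1 < S.len c) :
    S.rankLabel X ρ (c, i) + S.rankLabel X ρ (c, i + 1) + 2 = 2 * S.size ∨
      S.rankLabel X ρ (c, i) + S.rankLabel X ρ (c, i + 1) + 4 ≤
        S.size + 2 * (S.lowEdges X).card := by
  have hg := h.isAligned_rankLabel
  have hr := S.topEdge_lt r
  have hlen := (h.odd_of_mem r h.mem).2.2
  have hlt_zero : S.rankLabel X ρ (S.topEdge r) < S.rankLabel X ρ (S.spine, 0) :=
    rankLabel_lt_rankLabel (S.len_pos _) (key_lt_key.2 (.inr
      ⟨by rw [h.tier_topEdge h.mem, tier_spine_zero], .inl (h.lt_spine r h.mem)⟩))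
  have hone_lt : S.rankLabel X ρ (S.spine, 1) < S.rankLabel X ρ (S.topEdge r) :=
    rankLabel_lt_rankLabel hr (key_lt_key.2 (.inl
      (by rw [h.tier_topEdge h.mem, tier_of_odd rfl h2.ge]; omega)))
  have hzero := h.rankLabel_spine_zero (.inl (by omega))
  rcases h.eq_or_eq c with rfl | rfl | rfl | rfl | rfl
  · obtain rfl : i = 0 := by omega
    have htop : S.size ≤ S.rankLabel X ρ (S.spine, 1) + 2 := by
      simpa only [topEdge, h2] using h.size_le_rankLabel_topEdge_spine_add_two (by omega)
    simp only [zero_add]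
    omega
  · grind [h.len_eq_one c, S.mem_legs.1 h.mem_left]
  · grind [h.len_eq_one c, S.mem_legs.1 h.mem_right]
  · right
    rw [pair_eq_odd_add_even]
    have hv : S.rankLabel X ρ (c, 2 * ((i + 1) / 2)) ≠ S.rankLabel X ρ (S.spine, 0) := fun heq =>
      h.ne_spine (Prod.mk.inj (hg.eq_of_eq (by grind) (S.len_pos _) heq)).1
    have hv' := hg.le_size (e := (c, 2 * ((i + 1) / 2))) (by grind)
    have ho : S.rankLabel X ρ (c, 2 * (i / 2) + 1) < S.rankLabel X ρ (S.spine, 1) :=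
      hg.lt_of_order_lt (by grind) (by grind) (by grind) h2.ge
        (by rw [tier_of_odd (by omega) (by omega), tier_of_odd rfl h2.ge]) (h.lt_spine c h.mem)
    have hL := h.three_le_card_freeLowEdges h.mem_left h.mem_right h.ne h.mem_pendant h.ne_pendant
    have := h.rankLabel_add_card_freeLowEdges_le (e := (S.spine, 1)) h2.ge rfl (.inl rfl)
    omega
  · grind [h.pendant]

lemma centerSum_left_add_three (h : S.IsScarce X ρ a r z s₁ s₂) (hz₁ : ρ s₁ < ρ z)
    (hz₂ : ρ s₂ < ρ z) : S.centerSum (S.startFor a) (S.rankLabel X ρ) a + 3 =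
      S.size + 2 * (S.lowEdges X).card ∧
      (S.lowEdges X).card ≤ S.rankLabel X ρ (S.topEdge z) := by
  obtain ⟨hs₁, hsa₁⟩ := S.mem_legs.1 h.mem_left
  obtain ⟨hs₂, hsa₂⟩ := S.mem_legs.1 h.mem_right
  obtain ⟨hz, -⟩ := S.mem_legs.1 h.mem_pendant
  have hlen₁ := h.len_eq_one s₁ hs₁ hsa₁
  have hlen₂ := h.len_eq_one s₂ hs₂ hsa₂
  have htop (c : C) (hc : c ≠ S.spine) (h1 : S.len c = 1) : c = s₁ ∨ c = s₂ ∨ c = z := by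
    have := h.eq_or_eq c
    have := h.odd_of_mem r h.mem
    grind
  have hM₁ := card_lowEdges_le_rankLabel_topEdge_add (X := X) (ρ := ρ) hs₁ hlen₁ {s₂, z}
    fun c hc h1 hlt => by grind
  have hM₂ := card_lowEdges_le_rankLabel_topEdge_add (X := X) (ρ := ρ) hs₂ hlen₂ {s₁, z}
    fun c hc h1 hlt => by grind
  have hM := card_lowEdges_le_rankLabel_topEdge_add (X := X) (ρ := ρ) hz h.pendant ∅
    fun c hc h1 hlt => by grind
  have hlt {s : C} (hs : s ≠ S.spine) (h1 : S.len s = 1) (hρ : ρ s < ρ z) :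
      S.rankLabel X ρ (S.topEdge s) < S.rankLabel X ρ (S.topEdge z) :=
    rankLabel_lt_rankLabel (S.topEdge_lt z) (key_lt_key.2 (.inr
      ⟨(tier_of_pendant hs h1 _).trans (tier_of_pendant hz h.pendant _).symm, .inl hρ⟩))
  have hle : S.rankLabel X ρ (S.topEdge z) ≤ (S.lowEdges X).card :=
    rankLabel_le_card_lowEdges (tier_of_pendant hz h.pendant _).le
  have hne : S.rankLabel X ρ (S.topEdge s₁) ≠ S.rankLabel X ρ (S.topEdge s₂) := fun heq =>
    h.ne (Prod.mk.inj (h.isAligned_rankLabel.eq_of_eq (S.topEdge_lt _) (S.topEdge_lt _) heq)).1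
  have := Finset.card_le_two (a := s₁) (b := z)
  have := Finset.card_le_two (a := s₂) (b := z)
  have := hlt hs₁ hlen₁ hz₁
  have := hlt hs₂ hlen₂ hz₂
  rw [Finset.card_empty] at hM
  rw [h.centerSum_left]
  omega

lemma isAntimagicFrom_of_len_eq_two (h : S.IsScarce X ρ a r z s₁ s₂) (h2 : S.len S.spine = 2)
    (hz₁ : ρ s₁ < ρ z) (hz₂ : ρ s₂ < ρ z) :
    S.IsAntimagicFrom (S.startFor a) (S.rankLabel X ρ) := by
  have hg := h.isAligned_rankLabel
  obtain ⟨hleft, hztop⟩ := h.centerSum_left_add_three hz₁ hz₂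
  have hright : ∀ c i, i + 1 < S.len c → S.rankLabel X ρ (c, i) + S.rankLabel X ρ (c, i + 1) <
      S.centerSum (S.startFor a) (S.rankLabel X ρ) (!a) := fun c i hi =>
    h.pair_lt_centerSum_not hg (fun _ _ => rfl) h.mem_pendant h.ne_pendant
      (h.two_le_rankLabel_topEdge (S.mem_legs.1 h.mem_pendant).1) hi
  have hcard := h.three_le_card_freeLowEdges h.mem_left h.mem_right h.ne h.mem_pendant h.ne_pendant
  have hsub := card_freeLowEdges_le (S := S) (X := X)
  have hmod := h.size_mod_two h2
  have hsize := h.size_add_size_le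
  rw [if_neg (by omega)] at hsize
  have hne : S.centerSum (S.startFor a) (S.rankLabel X ρ) a <
      S.centerSum (S.startFor a) (S.rankLabel X ρ) (!a) := by
    have := hg.pos (e := (S.spine, 0)) (S.len_pos _)
    have := card_lowEdges_lt_size (S := S) (X := X)
    rw [h.centerSum_right]
    omega
  have hsep := hg.separatesPairs h.toIsOrder
  have hb (b : Bool) : b = a ∨ b = !a := by cases a <;> cases b <;> simp
  refine ⟨hsep, fun c hc b => ?_, fun c i hi b => ?_, ?_⟩
  · rcases hb b with rfl | rfl
    · have := hg.le_size (e := (c, 0)) (S.len_pos c)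
      omega
    · exact (hsep.leaf_lt_pair c hc S.spine 0 (by omega)).trans (hright _ _ (by omega))
  · rcases hb b with rfl | rfl
    · have := h.pair_eq_or_add_two_le h2 hi
      omega
    · exact (hright c i hi).ne
  · cases a
    · exact hne.ne'
    · exact hne.ne

end IsScarce

lemma exists_long_leg {b : Bool} (h : ∃ c ∈ S.legs b, 2 ≤ S.len c) :
    ∃ r ∈ S.legs b, 2 ≤ S.len r ∧ (S.len r % 2 = 0 ∨ ∀ c ∈ S.legs b, S.len c % 2 = 1) := by
  by_cases heven : ∃ c ∈ S.legs b, S.len c % 2 = 0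
  · obtain ⟨c, hc, heven⟩ := heven
    exact ⟨c, hc, by grind [S.len_pos c], .inl heven⟩
  · obtain ⟨c, hc, hlen⟩ := h
    exact ⟨c, hc, hlen, .inr fun c hc => by grind⟩

lemma exists_isPoorOrder (ha : ∀ c ∈ S.legs a, S.len c = 1) (hr : r ∈ S.legs (!a))
    (hlen : 2 ≤ S.len r) (hodd : S.len r % 2 = 0 ∨ ∀ c ∈ S.legs (!a), S.len c % 2 = 1)
    (T : C → Prop) (hT : ∀ c, T c → S.len c = 1) :
    ∃ ρ, S.IsPoorOrder (fun c => c = r ∧ S.len c % 2 = 1) ρ a r ∧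
      ∀ c c', c ≠ S.spine → c' ≠ S.spine → S.len c = 1 → S.len c' = 1 → ¬T c → T c' →
        ρ c < ρ c' := by
  obtain ⟨hr', hra⟩ := S.mem_legs.1 hr
  obtain ⟨ρ, hρ, hlt⟩ := S.exists_isOrder (X := fun c => c = r ∧ S.len c % 2 = 1)
    (fun c => T c ∨ c = r) (by rintro c ⟨rfl, hc⟩; exact ⟨hr', hc, by omega⟩)
  refine ⟨ρ, ⟨hρ, fun c hc hca => ha c (S.mem_legs.2 ⟨hc, hca⟩), hr', hra, by grind,
    fun c hc => hc.1, fun c hc hcr heven => ?_⟩, fun c c' hc hc' h1 h1' hcT hcT' => ?_⟩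
  · have hca : S.side c = !a := Bool.eq_not_of_ne fun hca => by
      have := ha c (S.mem_legs.2 ⟨hc, hca⟩)
      omega
    have := hodd.imp_right fun h => h c (S.mem_legs.2 ⟨hc, hca⟩)
    have := hT c
    exact hlt c r hc hr' (by grind) (.inr rfl) (by omega)
  · exact hlt c c' hc hc' (by grind) (.inl hcT') (.inl ⟨h1, h1'⟩)

lemma exists_isAntimagicFrom_of_poor (ha : ∀ c ∈ S.legs a, S.len c = 1)
    (h : ∃ c ∈ S.legs (!a), 2 ≤ S.len c) : ∃ b₀ g, S.IsAntimagicFrom b₀ g := by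
  obtain ⟨r, hr, hlen, hodd⟩ := exists_long_leg h
  obtain ⟨z, hrz, hz⟩ := S.exists_leg_ne (!a) r
  rw [← mem_legs] at hz
  let X : C → Prop := fun c => c = r ∧ S.len c % 2 = 1
  obtain ⟨ρ, hρ, hlt⟩ := exists_isPoorOrder ha hr hlen hodd (· ∈ S.legs a) ha
  obtain ⟨s₁, hs₁, s₂, hs₂, hne, hM₁, hM₂⟩ := hρ.exists_pendants fun c hc h1 s hs =>
    hlt c s (S.mem_legs.1 hc).1 (S.mem_legs.1 hs).1 h1 (ha s hs)
      (fun hca => ne_of_mem_legs hca hc rfl) hs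
  by_cases htie : S.centerSum (S.startFor a) (S.rankLabel X ρ) true =
      S.centerSum (S.startFor a) (S.rankLabel X ρ) false
  swap
  · exact ⟨_, _, hρ.isAntimagicFrom_rankLabel hs₁ hs₂ hne hM₁ hM₂ hz hrz htie⟩
  by_cases hL : 4 ≤ (S.freeLowEdges X).card
  · exact ⟨_, hρ.isAntimagicFrom_of_tie hs₁ hs₂ hne hM₁ hM₂ hz hrz hL htie⟩
  obtain ⟨hrX, hz1, hall⟩ := hρ.eq_of_card_freeLowEdges_le_three hs₁ hs₂ hne hz hrz
    (hodd.imp_right fun h => h z hz) (Nat.le_of_lt_succ (not_le.1 hL))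
  -- A tie is left only if the spine has length `2`; then `z` is given the largest low label.
  by_cases h2 : S.len S.spine = 2
  · obtain ⟨ρ', hρ', hlt'⟩ := exists_isPoorOrder ha hr hlen hodd (· = z) fun c hc => hc ▸ hz1
    have hs {s : C} (hs : s ∈ S.legs a) : ρ' s < ρ' z :=
      hlt' s z (S.mem_legs.1 hs).1 (S.mem_legs.1 hz).1 (ha s hs) hz1
        (ne_of_mem_legs hs hz) rfl
    exact ⟨_, _, IsScarce.isAntimagicFrom_of_len_eq_two
      ⟨hρ', hs₁, hs₂, hne, hz, hrz, hrX, hz1, hall⟩ h2 (hs hs₁) (hs hs₂)⟩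
  · have := IsScarce.centerSum_left_lt ⟨hρ, hs₁, hs₂, hne, hz, hrz, hrX, hz1, hall⟩ h2
    cases a
    · exact absurd htie this.ne'
    · exact absurd htie this.ne

end SpiderShape

/-! ### Only pendant legs -/

namespace SpiderShape

variable {C : Type*} [Fintype C] {S : SpiderShape C} {g : C × ℕ → ℕ} {t u s : C}

/-- A labeling for shapes all of whose legs are pendant edges: along the spine the smallest labels
alternate with the largest ones, and the leg `t` has the largest of the remaining labels. -/
structure IsPendantLabeling (S : SpiderShape C) (t : C) (g : C × ℕ → ℕ) : Prop where
  len_eq_one : ∀ c, c ≠ S.spine → S.len c = 1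
  bijOn : Set.BijOn g S.edges (Set.Icc 1 S.size)
  spine_apply : ∀ i, g (S.spine, i) =
    if i % 2 = 0 then S.size - (S.len S.spine + 1) / 2 + 1 + i / 2 else (i + 1) / 2
  top_apply : g (S.topEdge t) = S.size - (S.len S.spine + 1) / 2

lemma topEdge_mem_star_iff {c : C} (hc : c ≠ S.spine) {b₀ b : Bool} :
    S.topEdge c ∈ S.star b₀ b ↔ S.side c = b := by
  have := S.len_pos c
  simp only [mem_star, topEdge, Prod.mk.injEq]
  grind

lemma exists_isPendantLabeling (h : ∀ c, c ≠ S.spine → S.len c = 1) (ht : t ≠ S.spine) :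
    ∃ g, S.IsPendantLabeling t g := by
  obtain ⟨ρ, hρ, hlast⟩ := exists_injective_strictMono_refinement fun c => if c = t then 1 else 0
  set L := Finset.univ.erase S.spine with hL
  have hsize : S.size = S.len S.spine + L.card := by
    rw [size, ← Finset.add_sum_erase _ _ (Finset.mem_univ S.spine), Finset.card_eq_sum_ones,
      Finset.sum_congr rfl fun c hc => h c (Finset.ne_of_mem_erase hc)]
  have hbij := rankBy_bijOn (E := L) hρ.injOn
  have hrank {c : C} (hc : c ≠ S.spine) : 1 ≤ rankBy L ρ c ∧ rankBy L ρ c ≤ L.card :=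
    hbij.mapsTo (by simpa [hL] using hc)
  have hinj {c c' : C} (hc : c ≠ S.spine) (hc' : c' ≠ S.spine)
      (heq : rankBy L ρ c = rankBy L ρ c') : c = c' :=
    hbij.injOn (by simpa [hL] using hc) (by simpa [hL] using hc') heq
  have htop : L.card ≤ rankBy L ρ t := by
    refine card_le_rankBy_add_card subset_rfl ∅ fun c _ hlt => ?_
    have := hlast c t
    grind
  let g : C × ℕ → ℕ := fun e => if e.1 = S.spine then
    if e.2 % 2 = 0 then S.size - (S.len S.spine + 1) / 2 + 1 + e.2 / 2 else (e.2 + 1) / 2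
    else S.len S.spine / 2 + rankBy L ρ e.1
  have hmaps : Set.MapsTo g S.edges (Finset.Icc 1 S.size) := by
    rintro ⟨c, i⟩ he
    simp only [Finset.mem_coe, mem_edges, Finset.mem_Icc, g] at he ⊢
    have := @hrank c
    grind
  have hinjOn : Set.InjOn g S.edges := by
    rintro ⟨c, i⟩ he ⟨c', i'⟩ he' heq
    simp only [Finset.mem_coe, mem_edges, g] at he he' heq
    have := @hrank c
    have := @hrank c'
    have := @hinj c c'
    grind
  refine ⟨g, h, ⟨by simpa using hmaps, hinjOn, ?_⟩, fun i => by simp [g], ?_⟩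
  · simpa using Finset.surjOn_of_injOn_of_card_le g hmaps hinjOn (by simp [card_edges])
  · have := hrank ht
    simp only [g, topEdge]
    grind

namespace IsPendantLabeling

lemma leaf_mem (h : S.IsPendantLabeling t g) {c : C} (hc : c ≠ S.spine) :
    S.len S.spine / 2 < g (c, 0) ∧ g (c, 0) ≤ S.size - (S.len S.spine + 1) / 2 := by
  have hedge : (c, 0) ∈ S.edges := S.mem_edges.2 (S.len_pos c)
  have hmem := h.bijOn.mapsTo hedge
  have hne (i : ℕ) (hi : i < S.len S.spine) : g (c, 0) ≠ g (S.spine, i) := fun heq =>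
    hc (Prod.mk.inj (h.bijOn.injOn hedge (S.mem_edges.2 hi) heq)).1
  constructor <;> by_contra! hlt
  · exact hne (2 * g (c, 0) - 1) (by have := hmem.1; omega)
      (by have := hmem.1; rw [h.spine_apply, if_neg (by omega)]; omega)
  · have := hmem.2
    refine hne (2 * (g (c, 0) - (S.size - (S.len S.spine + 1) / 2) - 1)) (by omega) ?_
    rw [h.spine_apply, if_pos (by omega)]
    omega

lemma topEdge_eq (h : S.IsPendantLabeling t g) {c : C} (hc : c ≠ S.spine) :
    S.topEdge c = (c, 0) := by
  simp [topEdge, h.len_eq_one c hc]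

lemma eq_spine (h : S.IsPendantLabeling t g) {c : C} {i : ℕ} (hi : i + 1 < S.len c) :
    c = S.spine := by
  by_contra hc
  have := h.len_eq_one c hc
  omega

lemma pair_eq (h : S.IsPendantLabeling t g) (i : ℕ) : g (S.spine, i) + g (S.spine, i + 1) =
    S.size - (S.len S.spine + 1) / 2 + 2 + i := by
  rw [h.spine_apply, h.spine_apply]
  split_ifs <;> omega

lemma separatesPairs (h : S.IsPendantLabeling t g) : S.SeparatesPairs g where
  bijOn := h.bijOn
  leaf_lt_pair c hc c' i hi := by
    rw [h.eq_spine hi, h.pair_eq]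
    have := (h.leaf_mem hc).2
    omega
  pair_inj c i c' i' hi hi' heq := by
    obtain rfl := h.eq_spine hi
    obtain rfl := h.eq_spine hi'
    rw [h.pair_eq, h.pair_eq] at heq
    exact ⟨rfl, by omega⟩

lemma lt_centerSum (h : S.IsPendantLabeling t g) (ht : t ∈ S.legs false) (b : Bool) :
    S.size - (S.len S.spine + 1) / 2 + S.len S.spine < S.centerSum true g b := by
  have hlen := S.len_pos S.spine
  cases b
  · obtain ⟨z, hne, hz, hzf⟩ := S.exists_leg_ne false t
    have := add_add_le_centerSum ht (S.mem_legs.2 ⟨hz, hzf⟩) hne true g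
    rw [h.top_apply, h.topEdge_eq hz, h.spine_apply] at this
    simp only [endIdx, reduceCtorEq, if_false] at this
    have := (h.leaf_mem hz).1
    split_ifs at * <;> omega
  · obtain ⟨c, c', hne, hc, hc', hct, hct'⟩ := S.exists_two_legs true
    have := add_add_le_centerSum (S.mem_legs.2 ⟨hc, hct⟩) (S.mem_legs.2 ⟨hc', hct'⟩) hne true g
    rw [h.topEdge_eq hc, h.topEdge_eq hc', h.spine_apply] at this
    simp only [endIdx, if_true] at this
    have := (h.leaf_mem hc).1
    have := (h.leaf_mem hc').1
    omega

lemma isAntimagicFrom (h : S.IsPendantLabeling t g) (ht : t ∈ S.legs false)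
    (hne : S.centerSum true g true ≠ S.centerSum true g false) : S.IsAntimagicFrom true g where
  toSeparatesPairs := h.separatesPairs
  leaf_lt_center c hc b := by
    have := (h.leaf_mem hc).2
    have := h.lt_centerSum ht b
    omega
  pair_ne_center c i hi b := by
    have := h.lt_centerSum ht b
    obtain rfl := h.eq_spine hi
    rw [h.pair_eq]
    omega
  centers_ne := hne

lemma comp_swap (h : S.IsPendantLabeling t g) (hu : u ≠ S.spine) (hs : s ≠ S.spine) (hut : u ≠ t)
    (hst : s ≠ t) : S.IsPendantLabeling t (g ∘ Equiv.swap (S.topEdge u) (S.topEdge s)) where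
  len_eq_one := h.len_eq_one
  bijOn := by
    refine h.bijOn.comp ((Equiv.swap _ _).bijOn' ?_ ?_) <;> intro e he <;>
      simp only [Finset.mem_coe, mem_edges, Equiv.symm_swap, Equiv.swap_apply_def] at he ⊢ <;>
      split_ifs <;> first | exact S.topEdge_lt _ | exact he
  spine_apply i := by
    rw [Function.comp, Equiv.swap_apply_of_ne_of_ne, h.spine_apply] <;>
      exact fun heq => by simp_all [topEdge]
  top_apply := by
    rw [Function.comp, Equiv.swap_apply_of_ne_of_ne, h.top_apply] <;>
      exact fun heq => by simp_all [topEdge]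

end IsPendantLabeling

lemma exists_isAntimagicFrom_of_forall_pendant (h : ∀ c, c ≠ S.spine → S.len c = 1) :
    ∃ b₀ g, S.IsAntimagicFrom b₀ g := by
  obtain ⟨t, s, hts, ht, hs, htf, hsf⟩ := S.exists_two_legs false
  obtain ⟨u, -, -, hu, -, hut, -⟩ := S.exists_two_legs true
  have htmem := S.mem_legs.2 ⟨ht, htf⟩
  obtain ⟨g, hg⟩ := exists_isPendantLabeling h ht
  by_cases htie : S.centerSum true g true = S.centerSum true g false
  · refine ⟨true, _, (hg.comp_swap hu hs (by grind) hts.symm).isAntimagicFrom htmem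
      (centerSum_comp_swap_ne (b := true) (fun heq => ?_) ?_ ?_ ?_ htie)⟩
    · have := congrArg Prod.fst
        (hg.bijOn.injOn (by simpa using S.topEdge_lt u) (by simpa using S.topEdge_lt s) heq)
      grind [topEdge]
    all_goals simp [topEdge_mem_star_iff, hu, hs, hut, hsf]
  · exact ⟨true, g, hg.isAntimagicFrom htmem htie⟩

theorem exists_isAntimagicFrom_true (S : SpiderShape C) : ∃ g, S.IsAntimagicFrom true g := by
  suffices ∃ b₀ g, S.IsAntimagicFrom b₀ g by
    obtain ⟨b₀, g, hg⟩ := this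
    exact hg.exists_true
  by_cases hlong : ∀ b, ∃ c ∈ S.legs b, 2 ≤ S.len c
  · exact exists_isAntimagicFrom_of_forall_long hlong
  push Not at hlong
  obtain ⟨a, ha⟩ := hlong
  have hpendant : ∀ c ∈ S.legs a, S.len c = 1 := fun c hc =>
    (Nat.le_of_lt_succ (ha c hc)).antisymm (S.len_pos c)
  by_cases hother : ∃ c ∈ S.legs (!a), 2 ≤ S.len c
  · exact exists_isAntimagicFrom_of_poor hpendant hother
  push Not at hother
  refine exists_isAntimagicFrom_of_forall_pendant fun c hc => ?_
  rcases Bool.eq_or_eq_not (S.side c) a with h | h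
  · exact hpendant c (S.mem_legs.2 ⟨hc, h⟩)
  · exact (Nat.le_of_lt_succ (hother c (S.mem_legs.2 ⟨hc, h⟩))).antisymm (S.len_pos c)

end SpiderShape

/-! ### Cutting a tree into threads -/

/-- A rooted tree, encoded by the parents of its vertices; the value of `parent root` is
meaningless. -/
structure ParentTree (V : Type*) where
  root : V
  parent : V → V
  depth : V → ℕ
  depth_parent_lt : ∀ w, w ≠ root → depth (parent w) < depth w

namespace ParentTree

variable {V : Type*} (T : ParentTree V) {B : Set V} {b c w : V} {i : ℕ}

lemma exists_iterate_parent_eq_root (w : V) : ∃ k, T.parent^[k] w = T.root := by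
  induction h : T.depth w using Nat.strong_induction_on generalizing w with
  | _ n ih =>
    by_cases hw : w = T.root
    · exact ⟨0, hw⟩
    · obtain ⟨k, hk⟩ := ih _ (h ▸ T.depth_parent_lt w hw) _ rfl
      exact ⟨k + 1, hk⟩

/-- The length of the thread of `c`, the path that climbs from `c` to the next vertex of `B`. -/
def threadLen (B : Set V) (c : V) : ℕ :=
  sInf {k | 1 ≤ k ∧ T.parent^[k] c ∈ B}

/-- The vertex of `B` at which the thread of `c` ends. -/
def threadEnd (B : Set V) (c : V) : V :=
  T.parent^[T.threadLen B c] c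

lemma iterate_parent_notMem (h1 : 1 ≤ i) (hi : i < T.threadLen B c) : T.parent^[i] c ∉ B :=
  fun h => Nat.notMem_of_lt_sInf hi ⟨h1, h⟩

section Thread

variable (hB : T.root ∈ B) (hc : c ≠ T.root)
include hB hc

lemma threadLen_spec : 1 ≤ T.threadLen B c ∧ T.threadEnd B c ∈ B := by
  refine Nat.sInf_mem (s := {k | 1 ≤ k ∧ T.parent^[k] c ∈ B}) ?_
  obtain ⟨k, hk⟩ := T.exists_iterate_parent_eq_root c
  exact ⟨k, Nat.one_le_iff_ne_zero.2 fun h => hc (by simpa [h] using hk), hk ▸ hB⟩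

lemma iterate_parent_ne_root (hi : i < T.threadLen B c) : T.parent^[i] c ≠ T.root := by
  rcases i.eq_zero_or_pos with rfl | hpos
  · exact hc
  · exact fun h => T.iterate_parent_notMem hpos hi (h ▸ hB)

lemma depth_iterate_parent_lt (hi : i < T.threadLen B c) :
    T.depth (T.parent^[i + 1] c) < T.depth c := by
  have hlt := T.depth_parent_lt _ (T.iterate_parent_ne_root hB hc hi)
  rw [Function.iterate_succ_apply']
  induction i with
  | zero => exact hlt
  | succ i ih =>
    have hi' : i < T.threadLen B c := by omega
    have := ih hi' (T.depth_parent_lt _ (T.iterate_parent_ne_root hB hc hi'))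
    rw [← Function.iterate_succ_apply' T.parent] at this
    exact hlt.trans this

end Thread

variable [Fintype V]

/-- The vertices with parent `w`. -/
def children (w : V) : Finset V :=
  Finset.univ.filter fun x => x ≠ T.root ∧ T.parent x = w

lemma mem_children {x : V} : x ∈ T.children w ↔ x ≠ T.root ∧ T.parent x = w := by
  simp [children]

/-- If `F w` is the label of the edge from `w` to its parent, this is the vertex sum at `w`. -/
def labelSum (F : V → ℕ) (w : V) : ℕ :=
  (if w = T.root then 0 else F w) + ∑ x ∈ T.children w, F x

/-- The set `B` contains the root and all the vertices with several children. -/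
structure IsBranchSet (B : Set V) : Prop where
  root_mem : T.root ∈ B
  card_children_le_one : ∀ w, w ∉ B → (T.children w).card ≤ 1

/-- The vertices other than the root that are not interior to a thread; if `B` is a branch set, each
edge lies on exactly one of their threads. -/
abbrev ThreadStart (B : Set V) : Type _ :=
  {c : V // c ≠ T.root ∧ (c ∈ B ∨ T.children c = ∅)}

lemma iterate_parent_mem_children (hB : T.root ∈ B) (hc : c ≠ T.root) (hi : i < T.threadLen B c) :
    T.parent^[i] c ∈ T.children (T.parent^[i + 1] c) :=
  T.mem_children.2 ⟨T.iterate_parent_ne_root hB hc hi, (Function.iterate_succ_apply' _ _ _).symm⟩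

lemma eq_zero_of_iterate_parent_eq (hB : T.root ∈ B) (hc : c ≠ T.root) (hi : i < T.threadLen B c)
    (s : T.ThreadStart B) (h : T.parent^[i] c = s) : i = 0 := by
  rcases i with _ | i
  · rfl
  · rcases s.2.2 with hs | hs
    · exact absurd (h ▸ hs) (T.iterate_parent_notMem (Nat.le_add_left 1 i) hi)
    · have := T.iterate_parent_mem_children hB hc (Nat.lt_of_succ_lt hi)
      rw [h, hs] at this
      exact absurd this (Finset.notMem_empty _)

namespace IsBranchSet

variable {T} (hB : T.IsBranchSet B)
include hB

lemma children_iterate_parent (hc : c ≠ T.root) (hi : i + 1 < T.threadLen B c) :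
    T.children (T.parent^[i + 1] c) = {T.parent^[i] c} := by
  have hmem := T.iterate_parent_mem_children hB.root_mem hc (Nat.lt_of_succ_lt hi)
  have hcard := hB.card_children_le_one _ (T.iterate_parent_notMem (Nat.le_add_left 1 i) hi)
  exact Finset.eq_singleton_iff_unique_mem.2
    ⟨hmem, fun x hx => Finset.card_le_one.1 hcard x hx _ hmem⟩

lemma eq_of_iterate_parent_eq {c c' : T.ThreadStart B} {i i' : ℕ} (hi : i < T.threadLen B c)
    (hi' : i' < T.threadLen B c') (h : T.parent^[i] c.1 = T.parent^[i'] c'.1) :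
    c = c' ∧ i = i' := by
  induction i generalizing i' with
  | zero =>
    obtain rfl := T.eq_zero_of_iterate_parent_eq hB.root_mem c'.2.1 hi' c h.symm
    exact ⟨Subtype.ext h, rfl⟩
  | succ i ih =>
    rcases i' with _ | i'
    · exact absurd (T.eq_zero_of_iterate_parent_eq hB.root_mem c.2.1 hi c' h) i.succ_ne_zero
    · have hchildren := hB.children_iterate_parent c.2.1 hi
      rw [h, hB.children_iterate_parent c'.2.1 hi', Finset.singleton_inj] at hchildren
      obtain ⟨rfl, rfl⟩ := ih (by omega) (by omega) hchildren.symm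
      exact ⟨rfl, rfl⟩

lemma exists_iterate_parent_eq (hw : w ≠ T.root) :
    ∃ (c : T.ThreadStart B) (i : ℕ), i < T.threadLen B c ∧ T.parent^[i] c.1 = w := by
  have hwf : WellFounded fun x y => T.depth y < T.depth x := by
    let _ : Preorder V := Preorder.lift T.depth
    exact wellFounded_gt
  induction w using hwf.induction with
  | _ w ih =>
    by_cases hstart : w ∈ B ∨ T.children w = ∅
    · exact ⟨⟨w, hw, hstart⟩, 0, (T.threadLen_spec hB.root_mem hw).1, rfl⟩
    · push Not at hstart
      obtain ⟨x, hx⟩ := hstart.2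
      obtain ⟨hroot, rfl⟩ := T.mem_children.1 hx
      obtain ⟨c, i, hi, rfl⟩ := ih x (T.depth_parent_lt x hroot) hroot
      rw [← Function.iterate_succ_apply' T.parent] at hstart ⊢
      refine ⟨c, i + 1, lt_of_le_of_ne hi fun h => hstart.1 ?_, rfl⟩
      rw [show i.succ = _ from h]
      exact (T.threadLen_spec hB.root_mem c.2.1).2

lemma sum_children (hb : b ∈ B) (F : V → ℕ) : ∑ x ∈ T.children b, F x =
    ∑ c ∈ Finset.univ.filter fun c : T.ThreadStart B => T.threadEnd B c = b,
      F (T.parent^[T.threadLen B c - 1] c) := by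
  have hpos (c : T.ThreadStart B) := (T.threadLen_spec hB.root_mem c.2.1).1
  have hlt (c : T.ThreadStart B) := Nat.sub_one_lt_of_lt (hpos c)
  refine (Finset.sum_bij (fun (c : T.ThreadStart B) _ => T.parent^[T.threadLen B c - 1] c.1)
    ?_ ?_ ?_ fun _ _ => rfl).symm
  · intro c hc
    have := T.iterate_parent_mem_children hB.root_mem c.2.1 (hlt c)
    rwa [Nat.sub_add_cancel (hpos c), ← threadEnd, (Finset.mem_filter.1 hc).2] at this
  · exact fun c _ c' _ h => (hB.eq_of_iterate_parent_eq (hlt c) (hlt c') h).1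
  · intro x hx
    obtain ⟨hroot, rfl⟩ := T.mem_children.1 hx
    obtain ⟨c, i, hi, rfl⟩ := hB.exists_iterate_parent_eq hroot
    rw [← Function.iterate_succ_apply' T.parent] at hb ⊢
    have hlen : T.threadLen B c = i + 1 := by
      by_contra h
      exact T.iterate_parent_notMem (Nat.le_add_left 1 i) (by omega) hb
    exact ⟨c, Finset.mem_filter.2 ⟨Finset.mem_univ c, by rw [threadEnd, hlen]⟩,
      by rw [hlen, Nat.add_sub_cancel]⟩

lemma card_threads (hb : b ∈ B) :
    (Finset.univ.filter fun c : T.ThreadStart B => T.threadEnd B c = b).card =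
      (T.children b).card := by
  simpa using (hB.sum_children hb fun _ => 1).symm

end IsBranchSet

end ParentTree

/-- A double spider, rooted at one of its two centers; the other center is `branch`. -/
structure RootedDoubleSpider (V : Type*) [Fintype V] extends ParentTree V where
  branch : V
  branch_ne_root : branch ≠ root
  three_le_card_children_root : 3 ≤ (toParentTree.children root).card
  two_le_card_children_branch : 2 ≤ (toParentTree.children branch).card
  card_children_le_one : ∀ w, w ≠ root → w ≠ branch → (toParentTree.children w).card ≤ 1

namespace RootedDoubleSpider

variable {V : Type*} [Fintype V] (D : RootedDoubleSpider V)

/-- The two centers. -/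
def centers : Set V :=
  {D.root, D.branch}

/-- The names of the two centers in `D.shape`. -/
def centerOf (b : Bool) : V :=
  if b then D.branch else D.root

lemma isBranchSet_centers : D.IsBranchSet D.centers where
  root_mem := Set.mem_insert _ _
  card_children_le_one w hw := by
    simp only [centers, Set.mem_insert_iff, Set.mem_singleton_iff, not_or] at hw
    exact D.card_children_le_one w hw.1 hw.2

lemma centerOf_mem_centers (b : Bool) : D.centerOf b ∈ D.centers := by
  cases b <;> simp [centerOf, centers]

/-- The starting vertices of the paths into which the centers cut the tree. -/
abbrev PathStart : Type _ :=
  D.ThreadStart D.centers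

/-- The starting vertex of the path that joins the centers. -/
def spineStart : D.PathStart :=
  ⟨D.branch, D.branch_ne_root, .inl (D.centerOf_mem_centers true)⟩

variable {D}

lemma pathLen_pos (c : D.PathStart) : 1 ≤ D.threadLen D.centers c :=
  (D.threadLen_spec D.isBranchSet_centers.root_mem c.2.1).1

lemma pathEnd_mem_centers (c : D.PathStart) : D.threadEnd D.centers c ∈ D.centers :=
  (D.threadLen_spec D.isBranchSet_centers.root_mem c.2.1).2

lemma children_eq_empty {c : D.PathStart} (hc : c ≠ D.spineStart) : D.children c = ∅ := by
  rcases c.2.2 with ((h : c.1 = D.root) | (h : c.1 = D.branch)) | h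
  · exact absurd h c.2.1
  · exact absurd (Subtype.ext h) hc
  · exact h

lemma threadEnd_spineStart : D.threadEnd D.centers D.spineStart = D.root := by
  refine (pathEnd_mem_centers D.spineStart).resolve_right fun
    (h : D.threadEnd D.centers D.branch = D.branch) => ?_
  have hpos : 1 ≤ D.threadLen D.centers D.branch := pathLen_pos D.spineStart
  have hlt := D.depth_iterate_parent_lt D.isBranchSet_centers.root_mem D.branch_ne_root
    (Nat.sub_one_lt_of_lt hpos)
  rw [Nat.sub_add_cancel hpos] at hlt
  exact (h ▸ hlt : D.depth (D.threadEnd D.centers D.branch) < _).ne (congrArg D.depth h)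

lemma decide_pathEnd_eq_iff {c : D.PathStart} {b : Bool} :
    decide (D.threadEnd D.centers c = D.branch) = b ↔ D.threadEnd D.centers c = D.centerOf b := by
  have := D.branch_ne_root
  rcases pathEnd_mem_centers c with h | (h : _ = D.branch) <;> cases b <;>
    simp_all [centerOf, eq_comm]

lemma exists_two_legs (b : Bool) : ∃ c c' : D.PathStart, c ≠ c' ∧ c ≠ D.spineStart ∧
    c' ≠ D.spineStart ∧ D.threadEnd D.centers c = D.centerOf b ∧
    D.threadEnd D.centers c' = D.centerOf b := by
  have hcard := D.isBranchSet_centers.card_threads (D.centerOf_mem_centers b)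
  set s := Finset.univ.filter fun c : D.PathStart => D.threadEnd D.centers c = D.centerOf b
  have htwo : 1 < (s.erase D.spineStart).card := by
    have hroot := D.three_le_card_children_root
    have hbranch := D.two_le_card_children_branch
    cases b
    · have := Finset.pred_card_le_card_erase (s := s) (a := D.spineStart)
      simp only [centerOf, Bool.false_eq_true, if_false] at hcard
      omega
    · rw [Finset.erase_eq_of_notMem, hcard]
      · exact hbranch
      · simpa [s, threadEnd_spineStart, centerOf] using D.branch_ne_root.symm
  obtain ⟨c, hc, c', hc', hne⟩ := Finset.one_lt_card.1 htwo
  simp only [s, Finset.mem_erase, Finset.mem_filter, Finset.mem_univ, true_and] at hc hc'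
  exact ⟨c, c', hne, hc.1, hc'.1, hc.2, hc'.2⟩

variable (D) in
/-- The shape of a rooted double spider; its spine is listed starting from `branch`, the center
named `true`. -/
def shape : SpiderShape D.PathStart where
  spine := D.spineStart
  len c := D.threadLen D.centers c
  side c := decide (D.threadEnd D.centers c = D.branch)
  len_pos := pathLen_pos
  exists_two_legs b := by simpa only [decide_pathEnd_eq_iff] using exists_two_legs b

variable (D) in
lemma bijOn_shape :
    Set.BijOn (fun e : D.PathStart × ℕ => D.parent^[e.2] e.1.1) D.shape.edges {w | w ≠ D.root} := by
  have hB := D.isBranchSet_centers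
  refine ⟨fun e he => ?_, fun e he e' he' h => ?_, fun w hw => ?_⟩
  · exact D.iterate_parent_ne_root hB.root_mem e.1.2.1 (D.shape.mem_edges.1 he)
  · exact Prod.ext_iff.2
      (hB.eq_of_iterate_parent_eq (D.shape.mem_edges.1 he) (D.shape.mem_edges.1 he') h)
  · obtain ⟨c, i, hi, h⟩ := hB.exists_iterate_parent_eq hw
    exact ⟨(c, i), D.shape.mem_edges.2 hi, h⟩

variable (D) in
lemma cases_vertex (w : V) : (∃ b, w = D.centerOf b) ∨ (∃ c : D.PathStart, c ≠ D.spineStart ∧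
    w = c) ∨ ∃ (c : D.PathStart) (i : ℕ), i + 1 < D.shape.len c ∧ w = D.parent^[i + 1] c := by
  by_cases hroot : w = D.root
  · exact .inl ⟨false, hroot⟩
  by_cases hbranch : w = D.branch
  · exact .inl ⟨true, hbranch⟩
  obtain ⟨c, i, hi, rfl⟩ := D.isBranchSet_centers.exists_iterate_parent_eq hroot
  rcases i with _ | i
  · exact .inr (.inl ⟨c, fun h => hbranch (congrArg Subtype.val h), rfl⟩)
  · exact .inr (.inr ⟨c, i, hi, rfl⟩)

section LabelSum

variable {F : V → ℕ} {g : D.PathStart × ℕ → ℕ}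
  (hF : ∀ e ∈ D.shape.edges, F (D.parent^[e.2] e.1.1) = g e)
include hF

lemma labelSum_pathStart {c : D.PathStart} (hc : c ≠ D.spineStart) :
    D.labelSum F c = g (c, 0) := by
  rw [ParentTree.labelSum, if_neg c.2.1, children_eq_empty hc, Finset.sum_empty, add_zero]
  exact hF (c, 0) (D.shape.mem_edges.2 (D.shape.len_pos c))

lemma labelSum_iterate_parent {c : D.PathStart} {i : ℕ} (hi : i + 1 < D.shape.len c) :
    D.labelSum F (D.parent^[i + 1] c) = g (c, i) + g (c, i + 1) := by
  have hB := D.isBranchSet_centers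
  rw [ParentTree.labelSum, if_neg (D.iterate_parent_ne_root hB.root_mem c.2.1 hi),
    hB.children_iterate_parent c.2.1 hi, Finset.sum_singleton,
    hF (c, i + 1) (D.shape.mem_edges.2 hi),
    hF (c, i) (D.shape.mem_edges.2 (Nat.lt_of_succ_lt hi)), add_comm]

lemma labelSum_centerOf (b : Bool) :
    D.labelSum F (D.centerOf b) = D.shape.centerSum true g b := by
  have htop (c : D.PathStart) : F (D.parent^[D.threadLen D.centers c - 1] c) =
      g (D.shape.topEdge c) :=
    hF (D.shape.topEdge c) (D.shape.mem_edges.2 (D.shape.topEdge_lt c))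
  have hlegs : D.shape.legs b = (Finset.univ.filter fun c : D.PathStart =>
      D.threadEnd D.centers c = D.centerOf b).erase D.spineStart := by
    ext c
    simp [shape, decide_pathEnd_eq_iff]
  rw [ParentTree.labelSum, D.isBranchSet_centers.sum_children (D.centerOf_mem_centers b),
    SpiderShape.centerSum_eq, hlegs]
  simp only [htop]
  cases b
  · rw [if_pos (show D.centerOf false = D.root from rfl), zero_add, ← Finset.add_sum_erase _ _
      (Finset.mem_filter.2 ⟨Finset.mem_univ D.spineStart, threadEnd_spineStart⟩)]
    rfl
  · rw [if_neg (show D.centerOf true ≠ D.root from D.branch_ne_root), Finset.erase_eq_of_notMem]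
    · exact congrArg (· + _) (hF (D.spineStart, 0) (D.shape.mem_edges.2 (D.shape.len_pos _)))
    · simpa [threadEnd_spineStart, centerOf] using D.branch_ne_root.symm

lemma labelSum_injective (hg : D.shape.IsAntimagicFrom true g) :
    Function.Injective (D.labelSum F) := by
  have hcenters (b b' : Bool) (h : D.shape.centerSum true g b = D.shape.centerSum true g b') :
      b = b' := by
    cases b <;> cases b'
    exacts [rfl, absurd h.symm hg.centers_ne, absurd h hg.centers_ne, rfl]
  have hedge (c : D.PathStart) : (c, 0) ∈ D.shape.edges :=
    D.shape.mem_edges.2 (D.shape.len_pos c)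
  intro w w' h
  rcases D.cases_vertex w with ⟨b, rfl⟩ | ⟨c, hc, rfl⟩ | ⟨c, i, hi, rfl⟩ <;>
  rcases D.cases_vertex w' with ⟨b', rfl⟩ | ⟨c', hc', rfl⟩ | ⟨c', i', hi', rfl⟩ <;>
  simp only [labelSum_centerOf hF, labelSum_pathStart hF, labelSum_iterate_parent hF, *,
    ne_eq, not_false_eq_true] at h
  · rw [hcenters b b' h]
  · exact absurd h (hg.leaf_lt_center c' hc' b).ne'
  · exact absurd h.symm (hg.pair_ne_center c' i' hi' b)
  · exact absurd h (hg.leaf_lt_center c hc b').ne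
  · exact congrArg Subtype.val (Prod.mk.inj (hg.bijOn.injOn (hedge c) (hedge c') h)).1
  · exact absurd h (hg.leaf_lt_pair c hc c' i' hi').ne
  · exact absurd h (hg.pair_ne_center c i hi b')
  · exact absurd h (hg.leaf_lt_pair c' hc' c i hi).ne'
  · obtain ⟨rfl, rfl⟩ := hg.pair_inj c i c' i' hi hi' h
    rfl

end LabelSum

end RootedDoubleSpider

lemma exists_bijOn_comp_eq {α β γ : Type*} [Nonempty α] {s : Set α} {t : Set β} {r : Set γ}
    {ψ : α → β} {g : α → γ} (hψ : Set.BijOn ψ s t) (hg : Set.BijOn g s r) :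
    ∃ f, Set.BijOn f t r ∧ ∀ x ∈ s, f (ψ x) = g x :=
  ⟨g ∘ Function.invFunOn ψ s, hg.comp (hψ.symm hψ.invOn_invFunOn.symm),
    fun _ hx => congrArg g (hψ.invOn_invFunOn.1 hx)⟩

lemma exists_adj_dist_lt {V : Type*} {G : SimpleGraph V} (hG : G.Connected) {u w : V}
    (h : w ≠ u) : ∃ x, G.Adj w x ∧ G.dist x u < G.dist w u := by
  obtain ⟨q, hq⟩ := hG.exists_walk_length_eq_dist w u
  cases q with
  | nil => exact absurd rfl h
  | cons hadj q =>
    refine ⟨_, hadj, ?_⟩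
    rw [← hq, SimpleGraph.Walk.length_cons]
    exact Nat.lt_succ_of_le (SimpleGraph.dist_le q)

namespace ParentTree

variable {V : Type*} (T : ParentTree V)

/-- The edges of `G` are those from the vertices other than the root to their parents. -/
def Spans (G : SimpleGraph V) : Prop :=
  Set.BijOn (fun w => s(w, T.parent w)) {w | w ≠ T.root} G.edgeSet

lemma injOn_parentEdge : Set.InjOn (fun w => s(w, T.parent w)) {w | w ≠ T.root} := by
  intro w hw w' hw' h
  rcases Sym2.eq_iff.1 h with h | ⟨h, h'⟩
  · exact h.1
  · have hlt := T.depth_parent_lt w hw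
    have hlt' := T.depth_parent_lt w' hw'
    rw [h'] at hlt
    rw [← h] at hlt'
    exact absurd hlt hlt'.asymm

lemma exists_spans [Finite V] {G : SimpleGraph V} (hG : G.IsTree) (u : V) :
    ∃ T : ParentTree V, T.root = u ∧ T.Spans G := by
  cases nonempty_fintype V
  have hcloser (w : V) : ∃ x, w ≠ u → G.Adj w x ∧ G.dist x u < G.dist w u := by
    by_cases h : w = u
    · exact ⟨w, absurd h⟩
    · exact (exists_adj_dist_lt hG.connected h).imp fun _ hx _ => hx
  choose parent hparent using hcloser
  let T : ParentTree V := ⟨u, parent, (G.dist · u), fun w hw => (hparent w hw).2⟩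
  have hmaps : Set.MapsTo (fun w => s(w, parent w)) {w | w ≠ u} G.edgeSet :=
    fun w hw => (hparent w hw).1
  refine ⟨T, rfl, hmaps, T.injOn_parentEdge, ?_⟩
  have hcard := hG.card_edgeFinset
  simpa using Finset.surjOn_of_injOn_of_card_le (s := Finset.univ.filter (· ≠ u))
    (t := G.edgeFinset) (fun w => s(w, parent w)) (by simpa using hmaps)
    (by simpa using T.injOn_parentEdge) (by rw [Finset.filter_ne', Finset.card_erase_of_mem
      (Finset.mem_univ u), Finset.card_univ]; omega)

variable [Fintype V] {T} {G : SimpleGraph V} (hT : T.Spans G)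

namespace Spans

include hT

lemma incidenceFinset_eq (w : V) : G.incidenceFinset w =
    (Finset.univ.filter fun x => x ≠ T.root ∧ (x = w ∨ T.parent x = w)).image
      fun x => s(x, T.parent x) := by
  ext e
  simp only [SimpleGraph.mem_incidenceFinset, SimpleGraph.incidenceSet, Set.mem_sep_iff,
    Finset.mem_image, Finset.mem_filter, Finset.mem_univ, true_and]
  constructor
  · rintro ⟨he, hw⟩
    obtain ⟨x, hx, rfl⟩ := hT.surjOn he
    exact ⟨x, ⟨hx, (Sym2.mem_iff.1 hw).imp Eq.symm Eq.symm⟩, rfl⟩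
  · rintro ⟨x, ⟨hx, hw⟩, rfl⟩
    exact ⟨hT.mapsTo hx, Sym2.mem_iff.2 (hw.imp Eq.symm Eq.symm)⟩

lemma vertexSum_eq (f : Sym2 V → ℕ) (w : V) :
    vertexSum G f w = T.labelSum (fun x => f s(x, T.parent x)) w := by
  rw [vertexSum, hT.incidenceFinset_eq, Finset.sum_image (T.injOn_parentEdge.mono fun x hx =>
    (Finset.mem_filter.1 hx).2.1), labelSum]
  split_ifs with hw
  · rw [zero_add]
    congr 1
    ext x
    grind [mem_children]
  · have hnot : w ∉ T.children w := fun h =>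
      (T.depth_parent_lt w hw).ne (congrArg T.depth (T.mem_children.1 h).2)
    rw [← Finset.sum_insert (f := fun x => f s(x, T.parent x)) hnot]
    congr 1
    ext x
    grind [mem_children]

lemma degree_eq (w : V) :
    G.degree w = (if w = T.root then 0 else 1) + (T.children w).card := by
  simpa [vertexSum, labelSum] using hT.vertexSum_eq (fun _ => 1) w

end Spans

end ParentTree

namespace RootedDoubleSpider

variable {V : Type*} [Fintype V] {G : SimpleGraph V}

lemma exists_spans (hG : G.IsTree) (hbranch : {v : V | 3 ≤ G.degree v}.ncard = 2) :
    ∃ D : RootedDoubleSpider V, D.Spans G := by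
  obtain ⟨u, v, huv, hset⟩ := Set.ncard_eq_two.1 hbranch
  have hdegree (w : V) : 3 ≤ G.degree w ↔ w = u ∨ w = v := Set.ext_iff.1 hset w
  obtain ⟨T, rfl, hT⟩ := ParentTree.exists_spans hG u
  simp only [hT.degree_eq] at hdegree
  refine ⟨{ T with
    branch := v
    branch_ne_root := huv.symm
    three_le_card_children_root := by simpa using hdegree T.root
    two_le_card_children_branch := ?_
    card_children_le_one := fun w hw hwv => ?_ }, hT⟩
  · have := (hdegree v).2 (.inr rfl)
    rw [if_neg huv.symm] at this
    omega
  · have := mt (hdegree w).1 (by simp [hw, hwv])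
    rw [if_neg hw] at this
    omega

end RootedDoubleSpider

/-- Every tree containing exactly two vertices of degree at least 3
is antimagic. -/
theorem doubleSpider_tree_isAntimagic {V : Type*} [Fintype V] (G : SimpleGraph V)
    (hT : G.IsTree) (hbranch : {v : V | 3 ≤ G.degree v}.ncard = 2) :
    IsAntimagic G := by
  obtain ⟨D, hD⟩ := RootedDoubleSpider.exists_spans hT hbranch
  obtain ⟨g, hg⟩ := D.shape.exists_isAntimagicFrom_true
  have hedges := hD.comp D.bijOn_shape
  have hsize : D.shape.size = G.edgeFinset.card := by
    rw [← D.shape.card_edges, ← Set.ncard_coe_finset, ← Set.ncard_coe_finset,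
      SimpleGraph.coe_edgeFinset, ← hedges.image_eq, hedges.injOn.ncard_image]
  have : Nonempty (D.PathStart × ℕ) := ⟨(D.spineStart, 0)⟩
  obtain ⟨f, hf, hfg⟩ := exists_bijOn_comp_eq hedges hg.bijOn
  have hsum : vertexSum G f = D.labelSum fun x => f s(x, D.parent x) :=
    funext (hD.vertexSum_eq f)
  exact ⟨f, hsize ▸ hf, hsum ▸ RootedDoubleSpider.labelSum_injective hfg hg⟩

end
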